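/- arXiv:1202.3325 — 10 statements merged into one kernel-verified Lean document; each statement's English description precedes it below -/
import Mathlib

section
/- Let X be a Banach space and let T(t), t ≥ 0, be a C0-semigroup on X. The following four statements are equivalent: (1) there exists β of class KL such that ‖T(t)x‖_X ≤ β(‖x‖_X, t) for all x ∈ X and all t ≥ 0; (2) the semigroup is uniformly stable, i.e. ‖T(t)‖ → 0 as t → ∞ (operator norm); (3) the semigroup is uniformly exponentially stable, i.e. there exist M, ω > 0 such that ‖T(t)‖ ≤ M e^{−ωt} for all t ≥ 0; (4) there exist M, a > 0 such that ‖T(t)x‖_X ≤ M e^{−at} ‖x‖_X for all x ∈ X and all t ≥ 0. -/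
open Filter Set

/-- A function of class `K`: continuous on `[0,∞)`, strictly increasing there, zero at zero. -/
def ClassK (γ : ℝ → ℝ) : Prop :=
  ContinuousOn γ (Ici 0) ∧ StrictMonoOn γ (Ici 0) ∧ γ 0 = 0

/-- A function of class `KL`. -/
def ClassKL (β : ℝ → ℝ → ℝ) : Prop :=
  (∀ t ≥ (0:ℝ), ClassK fun r => β r t) ∧
  (∀ r > (0:ℝ), ContinuousOn (β r) (Ici 0) ∧ AntitoneOn (β r) (Ici 0) ∧
      Tendsto (β r) atTop (nhds 0))

/-!
Because `t ↦ ‖T t‖` is submultiplicative, a single time `τ > 0` with `‖T τ‖ < 1` forces geometric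
decay along the multiples of `τ`; the uniform boundedness principle controls `‖T s‖` for
`s ∈ [0, τ]` and so fills the gaps, giving exponential decay. A `KL` estimate provides such a `τ`,
since linearity lets its values at radius `1` bound the operator norm.
-/

section Submultiplicative

theorem map_nsmul_add_le_pow_mul {G R : Type*} [AddMonoid G] [Preorder G] [AddLeftMono G]
    [MonoidWithZero R] [Preorder R] [PosMulMono R] {f : G → R} (hf : ∀ t ≥ 0, 0 ≤ f t)
    (hmul : ∀ t ≥ 0, ∀ s ≥ 0, f (t + s) ≤ f t * f s) {τ s : G} (hτ : 0 ≤ τ) (hs : 0 ≤ s) (n : ℕ) :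
    f (n • τ + s) ≤ f τ ^ n * f s := by
  induction n with
  | zero => simp
  | succ n ih =>
    calc f ((n + 1) • τ + s) = f (τ + (n • τ + s)) := by rw [succ_nsmul', add_assoc]
      _ ≤ f τ * f (n • τ + s) := hmul τ hτ _ (add_nonneg (nsmul_nonneg hτ n) hs)
      _ ≤ f τ * (f τ ^ n * f s) := mul_le_mul_of_nonneg_left ih (hf τ hτ)
      _ = f τ ^ (n + 1) * f s := by rw [pow_succ', mul_assoc]

variable {f : ℝ → ℝ} {τ C : ℝ}

theorem le_mul_exp_of_le_exp (hf : ∀ t ≥ 0, 0 ≤ f t)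
    (hmul : ∀ t ≥ 0, ∀ s ≥ 0, f (t + s) ≤ f t * f s) (hτ : 0 < τ)
    (hC : ∀ s ∈ Icc 0 τ, f s ≤ C) {ω : ℝ} (hω : 0 ≤ ω) (hfτ : f τ ≤ Real.exp (-ω * τ))
    {t : ℝ} (ht : 0 ≤ t) : f t ≤ C * Real.exp (ω * τ) * Real.exp (-ω * t) := by
  set n := ⌊t / τ⌋₊
  have hn_le : n * τ ≤ t := (le_div_iff₀ hτ).1 (Nat.floor_le (div_nonneg ht hτ.le))
  have lt_hn : t < (n + 1) * τ := (div_lt_iff₀ hτ).1 (Nat.lt_floor_add_one _)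
  have hrem : t - n * τ ∈ Icc 0 τ := ⟨by linarith, by linarith⟩
  have hC0 : 0 ≤ C := (hf τ hτ.le).trans (hC τ (right_mem_Icc.2 hτ.le))
  have hexp : -ω * (n * τ) ≤ ω * τ + -ω * t := by nlinarith
  calc f t = f (n • τ + (t - n * τ)) := by rw [nsmul_eq_mul, add_sub_cancel]
    _ ≤ f τ ^ n * f (t - n * τ) := map_nsmul_add_le_pow_mul hf hmul hτ.le hrem.1 n
    _ ≤ Real.exp (-ω * τ) ^ n * C :=
      mul_le_mul (pow_le_pow_left₀ (hf τ hτ.le) hfτ n) (hC _ hrem) (hf _ hrem.1) (by positivity)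
    _ = C * Real.exp (-ω * (n * τ)) := by rw [← Real.exp_nat_mul, mul_comm, mul_left_comm]
    _ ≤ C * Real.exp (ω * τ + -ω * t) := by gcongr
    _ = C * Real.exp (ω * τ) * Real.exp (-ω * t) := by rw [Real.exp_add, mul_assoc]

theorem exists_pos_le_exp_neg_mul {r : ℝ} (hr : r < 1) (τ : ℝ) :
    ∃ ω > 0, r ≤ Real.exp (-ω * τ) := by
  have hlim : Tendsto (fun ω => Real.exp (-ω * τ)) (nhdsWithin 0 (Ioi 0)) (nhds 1) := by
    have hcont : Continuous fun ω => Real.exp (-ω * τ) := by fun_prop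
    simpa using (hcont.tendsto 0).mono_left nhdsWithin_le_nhds
  obtain ⟨ω, hrω, hω⟩ := ((hlim.eventually_const_le hr).and self_mem_nhdsWithin).exists
  exact ⟨ω, hω, hrω⟩

theorem exists_le_mul_exp_of_lt_one (hf : ∀ t ≥ 0, 0 ≤ f t)
    (hmul : ∀ t ≥ 0, ∀ s ≥ 0, f (t + s) ≤ f t * f s) (hτ : 0 < τ)
    (hC : ∀ s ∈ Icc 0 τ, f s ≤ C) (hfτ : f τ < 1) :
    ∃ M ω : ℝ, 0 < M ∧ 0 < ω ∧ ∀ t ≥ 0, f t ≤ M * Real.exp (-ω * t) := by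
  obtain ⟨ω, hω, hfω⟩ := exists_pos_le_exp_neg_mul hfτ τ
  have hC' : ∀ s ∈ Icc 0 τ, f s ≤ max C 1 := fun s hs => (hC s hs).trans (le_max_left C 1)
  have hM : 0 < max C 1 * Real.exp (ω * τ) := by positivity
  exact ⟨_, ω, hM, hω, fun t ht => le_mul_exp_of_le_exp hf hmul hτ hC' hω.le hfω ht⟩

end Submultiplicative

section ComparisonFunctions

theorem classK_const_mul {c : ℝ} (hc : 0 < c) : ClassK fun r => c * r :=
  ⟨by fun_prop, (strictMono_mul_left_of_pos hc).strictMonoOn _, mul_zero c⟩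

theorem classKL_mul {g : ℝ → ℝ} (hpos : ∀ t ≥ 0, 0 < g t) (hcont : ContinuousOn g (Ici 0))
    (hanti : AntitoneOn g (Ici 0)) (hlim : Tendsto g atTop (nhds 0)) :
    ClassKL fun r t => g t * r := by
  refine ⟨fun t ht => classK_const_mul (hpos t ht), fun r hr => ⟨?_, ?_, ?_⟩⟩
  · exact hcont.mul continuousOn_const
  · exact fun s hs t ht hst => mul_le_mul_of_nonneg_right (hanti hs ht hst) hr.le
  · simpa using hlim.mul_const r

theorem classKL_mul_exp_mul {M a : ℝ} (hM : 0 < M) (ha : 0 < a) :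
    ClassKL fun r t => M * Real.exp (-a * t) * r := by
  have hlim : Tendsto (fun t => M * Real.exp (-a * t)) atTop (nhds 0) := by
    have hbot : Tendsto (fun t => -a * t) atTop atBot :=
      tendsto_id.const_mul_atTop_of_neg (neg_neg_of_pos ha)
    simpa using (Real.tendsto_exp_atBot.comp hbot).const_mul M
  have hanti : Antitone fun t => M * Real.exp (-a * t) := fun s t hst =>
    mul_le_mul_of_nonneg_left (Real.exp_le_exp.2 (by nlinarith)) hM.le
  exact classKL_mul (fun t _ => by positivity) (by fun_prop) (hanti.antitoneOn _) hlim

end ComparisonFunctions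

section OperatorNorm

variable {𝕜 𝕜₂ E F : Type*} [NontriviallyNormedField 𝕜] [NontriviallyNormedField 𝕜₂]
  [SeminormedAddCommGroup E] [SeminormedAddCommGroup F] [NormedSpace 𝕜 E] [NormedSpace 𝕜₂ F]
  {σ : 𝕜 →+* 𝕜₂} [RingHomIsometric σ]

theorem opNorm_le_mul_of_norm_le_monotoneOn {γ : ℝ → ℝ} (hγ : MonotoneOn γ (Ici 0))
    {L : E →SL[σ] F} (hL : ∀ x, ‖L x‖ ≤ γ ‖x‖) {c : 𝕜} (hc : 1 < ‖c‖) : ‖L‖ ≤ ‖c‖ * γ 1 := by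
  have hle_one : ∀ x : E, ‖x‖ ≤ 1 → ‖L x‖ ≤ γ 1 := fun x hx =>
    (hL x).trans (hγ (norm_nonneg x) (mem_Ici.2 zero_le_one) hx)
  have hγ1 : 0 ≤ γ 1 := (norm_nonneg _).trans (hle_one 0 (by simp))
  refine ContinuousLinearMap.opNorm_le_of_shell one_pos (by positivity) hc fun x hx hx1 => ?_
  have hcx : 1 ≤ ‖c‖ * ‖x‖ := (div_le_iff₀' (one_pos.trans hc)).1 hx
  calc ‖L x‖ ≤ γ 1 := hle_one x hx1.le
    _ ≤ ‖c‖ * ‖x‖ * γ 1 := le_mul_of_one_le_left hγ1 hcx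
    _ = ‖c‖ * γ 1 * ‖x‖ := mul_right_comm _ _ _

theorem tendsto_opNorm_zero_of_norm_le_classKL {β : ℝ → ℝ → ℝ} (hβ : ClassKL β)
    {T : ℝ → E →SL[σ] F} (hT : ∀ x, ∀ t ≥ 0, ‖T t x‖ ≤ β ‖x‖ t) :
    Tendsto (fun t => ‖T t‖) atTop (nhds 0) := by
  obtain ⟨c, hc⟩ := NormedField.exists_one_lt_norm 𝕜
  have hlim : Tendsto (fun t => ‖c‖ * β 1 t) atTop (nhds 0) := by
    simpa using (hβ.2 1 one_pos).2.2.const_mul ‖c‖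
  refine squeeze_zero' (Eventually.of_forall fun t => norm_nonneg _) ?_ hlim
  filter_upwards [eventually_ge_atTop 0] with t ht
  exact opNorm_le_mul_of_norm_le_monotoneOn (hβ.1 t ht).2.1.monotoneOn (fun x => hT x t ht) hc

theorem exists_opNorm_le_of_isCompact [CompleteSpace E] {α : Type*} [TopologicalSpace α]
    {K : Set α} (hK : IsCompact K) {T : α → E →SL[σ] F}
    (hT : ∀ x, ContinuousOn (fun t => T t x) K) : ∃ C, ∀ t ∈ K, ‖T t‖ ≤ C := by
  have hpointwise : ∀ x, ∃ C, ∀ t : K, ‖T t x‖ ≤ C := fun x => by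
    simpa only [Subtype.forall] using hK.exists_bound_of_continuousOn (hT x)
  simpa only [Subtype.forall] using banach_steinhaus hpointwise

end OperatorNorm

section Semigroup

variable {𝕜 X : Type*} [NontriviallyNormedField 𝕜] [SeminormedAddCommGroup X] [NormedSpace 𝕜 X]
  {T : ℝ → X →L[𝕜] X}

theorem exists_opNorm_le_mul_exp_of_tendsto_zero
    (hTsem : ∀ t ≥ 0, ∀ s ≥ 0, T (t + s) = (T t).comp (T s))
    (hTbdd : ∀ τ, ∃ C, ∀ t ∈ Icc 0 τ, ‖T t‖ ≤ C)
    (hlim : Tendsto (fun t => ‖T t‖) atTop (nhds 0)) :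
    ∃ M ω : ℝ, 0 < M ∧ 0 < ω ∧ ∀ t ≥ 0, ‖T t‖ ≤ M * Real.exp (-ω * t) := by
  obtain ⟨τ, hTτ, hτ⟩ :=
    ((hlim.eventually_lt_const one_pos).and (eventually_gt_atTop 0)).exists
  obtain ⟨C, hC⟩ := hTbdd τ
  have hmul : ∀ t ≥ 0, ∀ s ≥ 0, ‖T (t + s)‖ ≤ ‖T t‖ * ‖T s‖ := fun t ht s hs => by
    rw [hTsem t ht s hs]
    exact (T t).opNorm_comp_le (T s)
  exact exists_le_mul_exp_of_lt_one (fun t _ => norm_nonneg (T t)) hmul hτ hC hTτ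

end Semigroup

theorem stmt1_general {𝕜 X : Type*} [NontriviallyNormedField 𝕜] [SeminormedAddCommGroup X]
    [NormedSpace 𝕜 X] (T : ℝ → X →L[𝕜] X)
    (hTsem : ∀ t ≥ (0 : ℝ), ∀ s ≥ (0 : ℝ), T (t + s) = (T t).comp (T s))
    (hTbdd : ∀ τ : ℝ, ∃ C, ∀ t ∈ Icc 0 τ, ‖T t‖ ≤ C) :
    List.TFAE [
      (∃ β, ClassKL β ∧ ∀ x : X, ∀ t ≥ (0 : ℝ), ‖T t x‖ ≤ β ‖x‖ t),
      Tendsto (fun t => ‖T t‖) atTop (nhds 0),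
      (∃ M ω : ℝ, 0 < M ∧ 0 < ω ∧ ∀ t ≥ (0 : ℝ), ‖T t‖ ≤ M * Real.exp (-ω * t)),
      (∃ M a : ℝ, 0 < M ∧ 0 < a ∧ ∀ x : X, ∀ t ≥ (0 : ℝ),
          ‖T t x‖ ≤ M * Real.exp (-a * t) * ‖x‖)] := by
  tfae_have 1 → 2 := fun ⟨_, hβ, hT⟩ => tendsto_opNorm_zero_of_norm_le_classKL hβ hT
  tfae_have 2 → 3 := exists_opNorm_le_mul_exp_of_tendsto_zero hTsem hTbdd
  tfae_have 3 → 4 := fun ⟨M, ω, hM, hω, hT⟩ =>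
    ⟨M, ω, hM, hω, fun x t ht => (T t).le_of_opNorm_le (hT t ht) x⟩
  tfae_have 4 → 1 := fun ⟨_, _, hM, ha, hT⟩ => ⟨_, classKL_mul_exp_mul hM ha, hT⟩
  tfae_finish

/-- For a `C₀`-semigroup `T` on a Banach space `X` the following are equivalent:
(1) a `KL` estimate `‖T(t)x‖ ≤ β(‖x‖, t)` (0-UGASx);
(2) uniform stability: `‖T(t)‖ → 0` as `t → ∞`;
(3) uniform exponential stability: `‖T(t)‖ ≤ M e^{-ωt}`;
(4) exponential 0-UGASx: `‖T(t)x‖ ≤ M e^{-at}‖x‖`. -/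
theorem stmt1 {X : Type*} [NormedAddCommGroup X] [NormedSpace ℝ X] [CompleteSpace X]
    (T : ℝ → X →L[ℝ] X)
    (hT0 : T 0 = ContinuousLinearMap.id ℝ X)
    (hTsem : ∀ t ≥ (0:ℝ), ∀ s ≥ (0:ℝ), T (t + s) = (T t).comp (T s))
    (hTcont : ∀ x : X, ContinuousOn (fun t => T t x) (Ici 0)) :
    List.TFAE [
      (∃ β, ClassKL β ∧ ∀ x : X, ∀ t ≥ (0:ℝ), ‖T t x‖ ≤ β ‖x‖ t),
      Tendsto (fun t => ‖T t‖) atTop (nhds 0),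
      (∃ M ω : ℝ, 0 < M ∧ 0 < ω ∧ ∀ t ≥ (0:ℝ), ‖T t‖ ≤ M * Real.exp (-ω * t)),
      (∃ M a : ℝ, 0 < M ∧ 0 < a ∧ ∀ x : X, ∀ t ≥ (0:ℝ),
          ‖T t x‖ ≤ M * Real.exp (-a * t) * ‖x‖)] :=
  stmt1_general T hTsem fun _ =>
    exists_opNorm_le_of_isCompact isCompact_Icc fun x => (hTcont x).mono Icc_subset_Ici_self
end

section
/- Let C₀(ℝ) denote the Banach space of continuous functions f : ℝ → ℝ vanishing at infinity, with the supremum norm, and for t ≥ 0 define T_q(t) by (T_q(t)f)(s) = e^{−t/(1+|s|)} f(s). Then: (a) for every f ∈ C₀(ℝ) and every t ≥ 0, the function T_q(t)f again belongs to C₀(ℝ) and ‖T_q(t)f‖_∞ ≤ ‖f‖_∞; (b) for every f ∈ C₀(ℝ), ‖T_q(t)f‖_∞ → 0 as t → ∞. In particular, the system ẋ = A_q x generated by this multiplication semigroup is globally asymptotically stable at zero (0-GAS): it is Lyapunov stable at 0 and every trajectory T_q(t)f converges to 0. -/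
open Filter Set

open scoped Topology NNReal ZeroAtInfty BoundedContinuousFunction

/-! A function `f ∈ C₀(X, E)` is small off some compact set `K`, where bounded multipliers keep it
small. On `K` the continuous function `q < 0` attains its maximum `c < 0`, so the multiplier
`exp (t q)` is at most `exp (t c)` there, which tends to `0` as `t → ∞`. -/

section MultiplicationOperator

variable {X 𝕜 E : Type*} [TopologicalSpace X] [SeminormedAddCommGroup E]

theorem norm_apply_le_norm (f : C₀(X, E)) (x : X) : ‖f x‖ ≤ ‖f‖ :=
  f.toBCF.norm_coe_le_norm x

variable [NormedField 𝕜] [NormedSpace 𝕜 E]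

theorem tendsto_bounded_smul_cocompact (m : X →ᵇ 𝕜) (f : C₀(X, E)) :
    Tendsto (fun x ↦ m x • f x) (cocompact X) (𝓝 0) := by
  have hbound : Tendsto (fun x ↦ ‖m‖ * ‖f x‖) (cocompact X) (𝓝 0) := by
    simpa only [norm_zero, mul_zero] using (zero_at_infty f).norm.const_mul ‖m‖
  refine squeeze_zero_norm (fun x ↦ ?_) hbound
  exact (norm_smul_le _ _).trans (by gcongr; exact m.norm_coe_le_norm x)

/-- The multiplication operator `f ↦ m • f` on `C₀(X, E)`. The multiplier `m` is a bounded
continuous function, so that the operator is bounded. -/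
noncomputable def multiplicationOperator (m : X →ᵇ 𝕜) : C₀(X, E) →L[𝕜] C₀(X, E) :=
  LinearMap.mkContinuous
    { toFun f := ⟨⟨fun x ↦ m x • f x, m.continuous.smul (map_continuous f)⟩,
        tendsto_bounded_smul_cocompact m f⟩
      map_add' f g := ZeroAtInftyContinuousMap.ext fun x ↦ smul_add (m x) (f x) (g x)
      map_smul' c f := ZeroAtInftyContinuousMap.ext fun x ↦ smul_comm (m x) c (f x) }
    ‖m‖ fun f ↦ norm_smul_le m f.toBCF

theorem norm_multiplicationOperator_apply_le (m : X →ᵇ 𝕜) (f : C₀(X, E)) :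
    ‖multiplicationOperator m f‖ ≤ ‖m‖ * ‖f‖ :=
  norm_smul_le m f.toBCF

theorem tendstoUniformly_smul_zero_of_tendstoUniformlyOn_isCompact {ι : Type*} {l : Filter ι}
    {m : ι → X → 𝕜} {C : ℝ} (hC : ∀ᶠ i in l, ∀ x, ‖m i x‖ ≤ C)
    (hm : ∀ K, IsCompact K → TendstoUniformlyOn m 0 l K) (f : C₀(X, E)) :
    TendstoUniformly (fun i x ↦ m i x • f x) 0 l := by
  rw [Metric.tendstoUniformly_iff]
  intro ε hε
  have hsmall : ∀ᶠ x in cocompact X, ‖f x‖ < ε / (|C| + 1) :=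
    (tendsto_zero_iff_norm_tendsto_zero.1 (zero_at_infty f)).eventually_lt_const (by positivity)
  obtain ⟨K, hK, hfK⟩ := mem_cocompact.1 hsmall
  have hmK := Metric.tendstoUniformlyOn_iff.1 (hm K hK) (ε / (‖f‖ + 1)) (by positivity)
  filter_upwards [hC, hmK] with i hiC hiK x
  rw [Pi.zero_apply, dist_zero_left]
  by_cases hx : x ∈ K
  · have hmx : ‖m i x‖ < ε / (‖f‖ + 1) := by simpa using hiK x hx
    have hfx : ‖f x‖ ≤ ‖f‖ + 1 := (norm_apply_le_norm f x).trans (lt_add_one _).le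
    calc ‖m i x • f x‖ ≤ ‖m i x‖ * ‖f x‖ := norm_smul_le _ _
      _ ≤ ‖m i x‖ * (‖f‖ + 1) := by gcongr
      _ < ε := (lt_div_iff₀ (by positivity)).1 hmx
  · have hfx : ‖f x‖ < ε / (|C| + 1) := hfK hx
    have hmx : ‖m i x‖ ≤ |C| + 1 := (hiC x).trans ((le_abs_self C).trans (lt_add_one _).le)
    calc ‖m i x • f x‖ ≤ ‖m i x‖ * ‖f x‖ := norm_smul_le _ _
      _ ≤ (|C| + 1) * ‖f x‖ := by gcongr
      _ < ε := (lt_div_iff₀' (by positivity)).1 hfx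

end MultiplicationOperator

theorem tendsto_iSup_norm_of_tendstoUniformly_zero {ι X E : Type*} [SeminormedAddCommGroup E]
    {l : Filter ι} {F : ι → X → E} (hF : TendstoUniformly F 0 l) :
    Tendsto (fun i ↦ ⨆ x, ‖F i x‖) l (𝓝 0) := by
  refine tendsto_order.2 ⟨fun a ha ↦ .of_forall fun i ↦
    ha.trans_le (Real.iSup_nonneg fun x ↦ norm_nonneg _), fun ε hε ↦ ?_⟩
  filter_upwards [Metric.tendstoUniformly_iff.1 hF (ε / 2) (half_pos hε)] with i hi
  have hle : ∀ x, ‖F i x‖ ≤ ε / 2 := fun x ↦ by simpa using (hi x).le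
  exact (Real.iSup_le hle (half_pos hε).le).trans_lt (half_lt_self hε)

theorem norm_exp_mul_le_one {t a : ℝ} (ht : 0 ≤ t) (ha : a ≤ 0) : ‖Real.exp (t * a)‖ ≤ 1 := by
  rw [Real.norm_of_nonneg (Real.exp_nonneg _), Real.exp_le_one_iff]
  exact mul_nonpos_of_nonneg_of_nonpos ht ha

section MultiplicationSemigroup

variable {X E : Type*} [TopologicalSpace X]

theorem tendstoUniformlyOn_exp_mul_atTop {q : X → ℝ} {K : Set X} (hK : IsCompact K)
    (hqK : ContinuousOn q K) (hq : ∀ x ∈ K, q x < 0) :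
    TendstoUniformlyOn (fun t x ↦ Real.exp (t * q x)) 0 atTop K := by
  rcases K.eq_empty_or_nonempty with rfl | hne
  · exact tendstoUniformlyOn_empty
  obtain ⟨x₀, hx₀, hmax⟩ := hK.exists_isMaxOn hne hqK
  have hlim : Tendsto (fun t ↦ Real.exp (t * q x₀)) atTop (𝓝 0) :=
    Real.tendsto_exp_atBot.comp (tendsto_id.atTop_mul_const_of_neg (hq x₀ hx₀))
  rw [Metric.tendstoUniformlyOn_iff]
  intro ε hε
  filter_upwards [hlim.eventually_lt_const hε, eventually_ge_atTop 0] with t htε ht x hx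
  rw [Pi.zero_apply, dist_zero_left, Real.norm_of_nonneg (Real.exp_nonneg _)]
  have hle : Real.exp (t * q x) ≤ Real.exp (t * q x₀) :=
    Real.exp_le_exp.2 (mul_le_mul_of_nonneg_left (hmax hx) ht)
  exact hle.trans_lt htε

/-- The function `exp (t q)` for `q ≤ 0` and `t ≥ 0`, as a bounded multiplier. -/
noncomputable def expMultiplier (q : C(X, ℝ)) (hq : ∀ x, q x ≤ 0) (t : ℝ≥0) : X →ᵇ ℝ :=
  .ofNormedAddCommGroup (fun x ↦ Real.exp (t * q x)) (by fun_prop) 1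
    fun x ↦ norm_exp_mul_le_one t.2 (hq x)

theorem norm_expMultiplier_le_one (q : C(X, ℝ)) (hq : ∀ x, q x ≤ 0) (t : ℝ≥0) :
    ‖expMultiplier q hq t‖ ≤ 1 :=
  BoundedContinuousFunction.norm_ofNormedAddCommGroup_le _ zero_le_one _

variable [SeminormedAddCommGroup E] [NormedSpace ℝ E]

/-- The multiplication semigroup `T_q(t) f = exp (t q) • f` on `C₀(X, E)`, for `q ≤ 0`. Time ranges
over `ℝ≥0` because `exp (t q)` may be unbounded for `t < 0`. -/
noncomputable def multiplicationSemigroup (q : C(X, ℝ)) (hq : ∀ x, q x ≤ 0) (t : ℝ≥0) :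
    C₀(X, E) →L[ℝ] C₀(X, E) :=
  multiplicationOperator (expMultiplier q hq t)

theorem multiplicationSemigroup_apply (q : C(X, ℝ)) (hq : ∀ x, q x ≤ 0) (t : ℝ≥0)
    (f : C₀(X, E)) (x : X) :
    multiplicationSemigroup q hq t f x = Real.exp (t * q x) • f x :=
  rfl

theorem norm_multiplicationSemigroup_apply_le (q : C(X, ℝ)) (hq : ∀ x, q x ≤ 0) (t : ℝ≥0)
    (f : C₀(X, E)) : ‖multiplicationSemigroup q hq t f‖ ≤ ‖f‖ :=
  (norm_multiplicationOperator_apply_le _ f).trans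
    (mul_le_of_le_one_left (norm_nonneg f) (norm_expMultiplier_le_one q hq t))

theorem tendstoUniformly_exp_mul_smul_atTop {q : X → ℝ} (hqc : Continuous q)
    (hq : ∀ x, q x < 0) (f : C₀(X, E)) :
    TendstoUniformly (fun t x ↦ Real.exp (t * q x) • f x) 0 atTop := by
  have hbound : ∀ᶠ t : ℝ in atTop, ∀ x, ‖Real.exp (t * q x)‖ ≤ 1 := by
    filter_upwards [eventually_ge_atTop 0] with t ht x
    exact norm_exp_mul_le_one ht (hq x).le
  exact tendstoUniformly_smul_zero_of_tendstoUniformlyOn_isCompact hbound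
    (fun _ hK ↦ tendstoUniformlyOn_exp_mul_atTop hK hqc.continuousOn fun x _ ↦ hq x) f

theorem stmt4_general (q : C(X, ℝ)) (hq : ∀ x, q x < 0) (f : C₀(X, E)) :
    (∀ t ≥ (0 : ℝ), ∃ g : C₀(X, E), (∀ x, g x = Real.exp (t * q x) • f x) ∧ ‖g‖ ≤ ‖f‖) ∧
    Tendsto (fun t : ℝ ↦ ⨆ x, ‖Real.exp (t * q x) • f x‖) atTop (𝓝 0) ∧
    (∀ ε > (0 : ℝ), ∃ δ > (0 : ℝ), ∀ f' : C₀(X, E), ‖f'‖ < δ →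
      ∀ t ≥ (0 : ℝ), ∀ x, ‖Real.exp (t * q x) • f' x‖ < ε) := by
  have hq' : ∀ x, q x ≤ 0 := fun x ↦ (hq x).le
  refine ⟨fun t ht ↦ ?_, ?_, fun ε hε ↦ ⟨ε, hε, fun f' hf' t ht x ↦ ?_⟩⟩
  · lift t to ℝ≥0 using ht
    exact ⟨multiplicationSemigroup q hq' t f, multiplicationSemigroup_apply q hq' t f,
      norm_multiplicationSemigroup_apply_le q hq' t f⟩
  · exact tendsto_iSup_norm_of_tendstoUniformly_zero
      (tendstoUniformly_exp_mul_smul_atTop q.continuous hq f)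
  · lift t to ℝ≥0 using ht
    rw [← multiplicationSemigroup_apply q hq']
    exact ((norm_apply_le_norm _ x).trans
      (norm_multiplicationSemigroup_apply_le q hq' t f')).trans_lt hf'

end MultiplicationSemigroup

/-- The continuous function `q(s) = -1/(1+|s|)` on `ℝ`, by which `A_q` multiplies. -/
noncomputable def negInvOneAddAbs : C(ℝ, ℝ) where
  toFun s := -1 / (1 + |s|)
  continuous_toFun := continuous_const.div (by fun_prop) fun s ↦ by positivity

theorem negInvOneAddAbs_neg (s : ℝ) : negInvOneAddAbs s < 0 :=
  div_neg_of_neg_of_pos neg_one_lt_zero (by positivity)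

theorem mul_negInvOneAddAbs (t s : ℝ) : t * negInvOneAddAbs s = -t / (1 + |s|) :=
  (mul_div_assoc t (-1) (1 + |s|)).symm.trans (by rw [mul_neg_one])

/-- The multiplication semigroup `T_q(t)` with `q(s) = -1/(1+|s|)` on `C₀(ℝ)`:
(a) it maps `C₀(ℝ)` into itself without increasing the sup-norm (Lyapunov stability at `0`);
(b) every trajectory tends to `0` in the sup-norm, i.e. the system `ẋ = A_q x` is 0-GAS. -/
theorem stmt4 (f : ZeroAtInftyContinuousMap ℝ ℝ) :
    (∀ t ≥ (0:ℝ), ∃ g : ZeroAtInftyContinuousMap ℝ ℝ,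
        (∀ s : ℝ, g s = Real.exp (-t / (1 + |s|)) * f s) ∧ ‖g‖ ≤ ‖f‖) ∧
    Tendsto (fun t : ℝ => ⨆ s : ℝ, |Real.exp (-t / (1 + |s|)) * f s|) atTop (nhds 0) ∧
    (∀ ε > (0:ℝ), ∃ δ > (0:ℝ), ∀ f' : ZeroAtInftyContinuousMap ℝ ℝ, ‖f'‖ < δ →
        ∀ t ≥ (0:ℝ), ∀ s : ℝ, |Real.exp (-t / (1 + |s|)) * f' s| < ε) := by
  simpa only [mul_negInvOneAddAbs, smul_eq_mul, Real.norm_eq_abs] using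
    stmt4_general negInvOneAddAbs negInvOneAddAbs_neg f
end

section
/- Let a > 0. For every t > 1 one has sup_{s∈ℝ} a·√(1+|s|)·(1 − e^{−t/(1+|s|)}) ≥ a·√t·(1 − e^{−1}). Consequently, for every x₀ in the space C₀(ℝ) of continuous functions vanishing at infinity, the family of functions x(t) : ℝ → ℝ defined by x(t)(s) = e^{−t/(1+|s|)} x₀(s) + a·√(1+|s|)·(1 − e^{−t/(1+|s|)}) satisfies sup_{s∈ℝ} |x(t)(s)| → ∞ as t → ∞. (Here x(t) is the mild solution of ẋ = A_q x + u with the multiplication semigroup (T_q(t)f)(s) = e^{−t/(1+|s|)}f(s) and the constant-in-time input u(s) = a/√(1+|s|), which has ‖u‖_∞ = a; hence a 0-GAS infinite-dimensional linear system can have trajectories that grow unboundedly under arbitrarily small bounded inputs.) -/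
open Filter Set

/-! At a point with relaxation time `τ` the semigroup decays like `e^{-t/τ}`, while the input
`a / √τ` accumulates to `a √τ (1 - e^{-t/τ})`. Since `1 - e^{-x} ≤ √x`, this is at most `a √t` for
every `τ`, so the suprema are finite. Since the relaxation times take all large values, at every
large time `t` some point has `τ = t`, and there the accumulated input is `a √t (1 - e⁻¹)`. The
contribution of a bounded initial state stays bounded, so it cannot compensate for this growth. -/

/-- The response at time `t`, from zero initial state, of the scalar system `ẋ = -x / τ + a / √τ`,
that is `∫₀ᵗ e^{-(t-r)/τ} (a / √τ) dr` in closed form. -/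
noncomputable def forcedResponse (a τ t : ℝ) : ℝ :=
  a * √τ * (1 - Real.exp (-t / τ))

/-- The mild solution with initial state `x₀` of the diagonal system with relaxation times `τ` and
input `s ↦ a / √(τ s)`; the semigroup `T_q` is the case `τ s = 1 + |s|`. -/
noncomputable def mildSolution {ι : Type*} (a : ℝ) (τ x₀ : ι → ℝ) (t : ℝ) (s : ι) : ℝ :=
  Real.exp (-t / τ s) * x₀ s + forcedResponse a (τ s) t

lemma one_sub_exp_neg_le_sqrt {x : ℝ} (hx : 0 ≤ x) : 1 - Real.exp (-x) ≤ √x := by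
  have h_nonneg : 0 ≤ 1 - Real.exp (-x) := by simpa using hx
  have h_le_one : 1 - Real.exp (-x) ≤ 1 := by linarith [Real.exp_pos (-x)]
  refine Real.le_sqrt_of_sq_le ?_
  calc (1 - Real.exp (-x)) ^ 2
      ≤ 1 - Real.exp (-x) := pow_le_of_le_one h_nonneg h_le_one two_ne_zero
    _ ≤ x := by linarith [Real.one_sub_le_exp_neg x]

section Pointwise

variable {a τ t : ℝ}

lemma exp_neg_div_le_one (hτ : 0 < τ) (ht : 0 ≤ t) : Real.exp (-t / τ) ≤ 1 :=
  Real.exp_le_one_iff.2 (div_nonpos_of_nonpos_of_nonneg (neg_nonpos.2 ht) hτ.le)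

lemma abs_exp_neg_div_mul_le (hτ : 0 < τ) (ht : 0 ≤ t) (x : ℝ) :
    |Real.exp (-t / τ) * x| ≤ |x| := by
  rw [abs_mul, Real.abs_exp]
  exact mul_le_of_le_one_left (abs_nonneg x) (exp_neg_div_le_one hτ ht)

lemma forcedResponse_nonneg (ha : 0 ≤ a) (hτ : 0 < τ) (ht : 0 ≤ t) :
    0 ≤ forcedResponse a τ t :=
  mul_nonneg (mul_nonneg ha (Real.sqrt_nonneg τ)) (sub_nonneg.2 (exp_neg_div_le_one hτ ht))

lemma forcedResponse_le (ha : 0 ≤ a) (hτ : 0 < τ) (ht : 0 ≤ t) :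
    forcedResponse a τ t ≤ a * √t := by
  have h_exp : 1 - Real.exp (-t / τ) ≤ √(t / τ) := by
    simpa only [neg_div] using one_sub_exp_neg_le_sqrt (div_nonneg ht hτ.le)
  calc forcedResponse a τ t
      ≤ a * √τ * √(t / τ) := mul_le_mul_of_nonneg_left h_exp (by positivity)
    _ = a * √t := by rw [mul_assoc, ← Real.sqrt_mul hτ.le, mul_div_cancel₀ t hτ.ne']

lemma forcedResponse_self (a : ℝ) (ht : t ≠ 0) :
    forcedResponse a t t = a * √t * (1 - Real.exp (-1)) := by
  rw [forcedResponse, neg_div, div_self ht]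

end Pointwise

section Family

variable {ι : Type*} {a C t : ℝ} {τ x₀ : ι → ℝ}

lemma bddAbove_range_forcedResponse (ha : 0 ≤ a) (hτ : ∀ s, 0 < τ s) (ht : 0 ≤ t) :
    BddAbove (range fun s => forcedResponse a (τ s) t) :=
  ⟨a * √t, forall_mem_range.2 fun s => forcedResponse_le ha (hτ s) ht⟩

lemma le_iSup_forcedResponse (ha : 0 ≤ a) (hτ : ∀ s, 0 < τ s) (ht : t ∈ range τ) :
    a * √t * (1 - Real.exp (-1)) ≤ ⨆ s, forcedResponse a (τ s) t := by
  obtain ⟨s, rfl⟩ := ht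
  rw [← forcedResponse_self a (hτ s).ne']
  exact le_ciSup (bddAbove_range_forcedResponse ha hτ (hτ s).le) s

lemma bddAbove_range_abs_mildSolution (ha : 0 ≤ a) (hτ : ∀ s, 0 < τ s)
    (hx₀ : ∀ s, |x₀ s| ≤ C) (ht : 0 ≤ t) :
    BddAbove (range fun s => |mildSolution a τ x₀ t s|) := by
  refine ⟨C + a * √t, forall_mem_range.2 fun s => ?_⟩
  calc |mildSolution a τ x₀ t s|
      ≤ |Real.exp (-t / τ s) * x₀ s| + |forcedResponse a (τ s) t| := abs_add_le _ _
    _ ≤ C + a * √t := by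
      rw [abs_of_nonneg (forcedResponse_nonneg ha (hτ s) ht)]
      exact add_le_add ((abs_exp_neg_div_mul_le (hτ s) ht _).trans (hx₀ s))
        (forcedResponse_le ha (hτ s) ht)

lemma forcedResponse_sub_le_abs_mildSolution {s : ι} (hτ : 0 < τ s) (hx₀ : |x₀ s| ≤ C)
    (ht : 0 ≤ t) : forcedResponse a (τ s) t - C ≤ |mildSolution a τ x₀ t s| := by
  have h_free : -C ≤ Real.exp (-t / τ s) * x₀ s :=
    neg_le_of_abs_le ((abs_exp_neg_div_mul_le hτ ht _).trans hx₀)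
  calc forcedResponse a (τ s) t - C
      ≤ mildSolution a τ x₀ t s := by rw [mildSolution]; linarith
    _ ≤ |mildSolution a τ x₀ t s| := le_abs_self _

lemma le_iSup_abs_mildSolution (ha : 0 ≤ a) (hτ : ∀ s, 0 < τ s) (hx₀ : ∀ s, |x₀ s| ≤ C)
    (ht : t ∈ range τ) :
    a * √t * (1 - Real.exp (-1)) - C ≤ ⨆ s, |mildSolution a τ x₀ t s| := by
  obtain ⟨s, rfl⟩ := ht
  rw [← forcedResponse_self a (hτ s).ne']
  exact (forcedResponse_sub_le_abs_mildSolution (hτ s) (hx₀ s) (hτ s).le).trans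
    (le_ciSup (bddAbove_range_abs_mildSolution ha hτ hx₀ (hτ s).le) s)

lemma tendsto_iSup_abs_mildSolution_atTop (ha : 0 < a) (hτ : ∀ s, 0 < τ s)
    (hrange : ∀ᶠ t in atTop, t ∈ range τ) (hx₀ : ∀ s, |x₀ s| ≤ C) :
    Tendsto (fun t => ⨆ s, |mildSolution a τ x₀ t s|) atTop atTop := by
  have h_pos : 0 < 1 - Real.exp (-1) := by simp
  have h_lower : Tendsto (fun t => a * √t * (1 - Real.exp (-1)) - C) atTop atTop :=
    tendsto_atTop_add_const_right _ _
      ((Real.tendsto_sqrt_atTop.const_mul_atTop ha).atTop_mul_const h_pos)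
  exact tendsto_atTop_mono' _
    (hrange.mono fun _ ht => le_iSup_abs_mildSolution ha.le hτ hx₀ ht) h_lower

end Family

theorem stmt5_general {ι : Type*} {τ : ι → ℝ} (hτ : ∀ s, 0 < τ s)
    (hrange : ∀ᶠ t in atTop, t ∈ range τ) {a : ℝ} (ha : 0 < a) :
    (∀ t ∈ range τ, a * √t * (1 - Real.exp (-1)) ≤ ⨆ s, forcedResponse a (τ s) t) ∧
    ∀ (x₀ : ι → ℝ) (C : ℝ), (∀ s, |x₀ s| ≤ C) →
      Tendsto (fun t => ⨆ s, |mildSolution a τ x₀ t s|) atTop atTop :=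
  ⟨fun _ ht => le_iSup_forcedResponse ha.le hτ ht,
    fun _ _ hx₀ => tendsto_iSup_abs_mildSolution_atTop ha hτ hrange hx₀⟩

lemma mem_range_one_add_abs {t : ℝ} (ht : 1 ≤ t) : t ∈ range fun s : ℝ => 1 + |s| :=
  ⟨t - 1, by simp [abs_of_nonneg (sub_nonneg.2 ht)]⟩

/-- For the 0-GAS multiplication semigroup `(T_q(t)f)(s) = e^{-t/(1+|s|)} f(s)` on `C₀(ℝ)` and
the constant-in-time input `u(s) = a/√(1+|s|)` (with `‖u‖_∞ = a` arbitrarily small), the mild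
solution `x(t)(s) = e^{-t/(1+|s|)} x₀(s) + a √(1+|s|) (1 - e^{-t/(1+|s|)})` grows unboundedly:
its sup-norm is bounded below by `a √t (1 - e^{-1})` for `t > 1` and tends to `∞`. -/
theorem stmt5 (a : ℝ) (ha : 0 < a) :
    (∀ t : ℝ, 1 < t →
      a * Real.sqrt t * (1 - Real.exp (-1)) ≤
        ⨆ s : ℝ, a * Real.sqrt (1 + |s|) * (1 - Real.exp (-t / (1 + |s|)))) ∧
    ∀ x₀ : ZeroAtInftyContinuousMap ℝ ℝ,
      Tendsto (fun t : ℝ => ⨆ s : ℝ,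
          |Real.exp (-t / (1 + |s|)) * x₀ s +
            a * Real.sqrt (1 + |s|) * (1 - Real.exp (-t / (1 + |s|)))|)
        atTop atTop := by
  have h_general := stmt5_general (τ := fun s : ℝ => 1 + |s|) (fun s => by positivity)
    ((eventually_ge_atTop 1).mono fun _ => mem_range_one_add_abs) ha
  exact ⟨fun t ht => h_general.1 t (mem_range_one_add_abs ht.le),
    fun x₀ => h_general.2 x₀ ‖x₀.toBCF‖ x₀.toBCF.norm_coe_le_norm⟩
end

section
/- Let X and U be normed linear spaces and let U_c be the space of bounded continuous functions u : [0,∞) → U with norm ‖u‖_{U_c} = sup_{s≥0}‖u(s)‖_U; for r ≥ 0 let S_r u denote the shifted input (S_r u)(τ) = u(τ + r), so that S_r u ∈ U_c and ‖S_r u‖_{U_c} ≤ ‖u‖_{U_c}. Let φ : [0,∞) × X × U_c → X satisfy: φ(0,x,u) = x for all x, u; t ↦ φ(t,x,u) is continuous for each x, u; the cocycle property φ(t+r, x, u) = φ(t, φ(r,x,u), S_r u) for all t, r ≥ 0; and φ(t,0,0) = 0 for all t ≥ 0 (x = 0 is an equilibrium). Suppose there exist a continuous function V : X → [0,∞), functions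 ψ₁, ψ₂ of class K∞, χ of class K, and a continuous positive definite function α : [0,∞) → [0,∞) (α(0) = 0, α(r) > 0 for r > 0) such that ψ₁(‖x‖_X) ≤ V(x) ≤ ψ₂(‖x‖_X) for all x ∈ X, and for all x ∈ X and all u ∈ U_c the implication holds: ‖x‖_X ≥ χ(‖u‖_{U_c}) ⟹ limsup_{t→0⁺} (V(φ(t,x,u)) − V(x))/t ≤ −α(‖x‖_X). Then the system is input-to-state stable: there exist β of class KL and γ of class K such that ‖φ(t,x,u)‖_X ≤ β(‖x‖_X, t) + γ(‖u‖_{U_c}) for all x ∈ X, all u ∈ U_c and all t ≥ 0. -/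
open Filter Set

/-- A function of class `K∞`: class `K` and unbounded. -/
def ClassKinf (γ : ℝ → ℝ) : Prop :=
  ClassK γ ∧ ∀ M : ℝ, ∃ r ≥ (0:ℝ), M < γ r

/-- A continuous positive definite function on `[0,∞)`. -/
def PosDef (α : ℝ → ℝ) : Prop :=
  ContinuousOn α (Ici 0) ∧ α 0 = 0 ∧ ∀ r > (0:ℝ), 0 < α r

/-- An admissible input: a bounded continuous function `[0,∞) → U`. -/
def IsInput {U : Type*} [NormedAddCommGroup U] (u : ℝ → U) : Prop :=
  ContinuousOn u (Ici 0) ∧ BddAbove ((fun s => ‖u s‖) '' Ici 0)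

/-- The norm `‖u‖_{U_c} = sup_{s ≥ 0} ‖u s‖` on the space of inputs. -/
noncomputable def inputNorm {U : Type*} [NormedAddCommGroup U] (u : ℝ → U) : ℝ :=
  sSup ((fun s => ‖u s‖) '' Ici 0)

open scoped Topology

/-!
The decay rate of an ISS-Lyapunov function depends on the state, so one first finds a continuous
`k > 0` with `k (V x) < α ‖x‖`; as long as `V` exceeds `ψ₂ (χ ‖u‖)` along a trajectory, it then
decreases at least as fast as the solutions of `v' = -k v`. These solutions lose travel time
`∫ dv / k v` at unit speed, which gives a class `KL` bound on `V`. Moreover `V` can never climb back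
above the threshold once it is below it, so the trajectory is bounded by the larger of the two
estimates.
-/

namespace ClassK

theorem nonneg {f : ℝ → ℝ} (hf : ClassK f) {r : ℝ} (hr : 0 ≤ r) : 0 ≤ f r :=
  hf.2.2.symm.trans_le (hf.2.1.monotoneOn self_mem_Ici hr hr)

theorem mapsTo {f : ℝ → ℝ} (hf : ClassK f) : MapsTo f (Ici 0) (Ici 0) :=
  fun _ hr => hf.nonneg hr

theorem pos {f : ℝ → ℝ} (hf : ClassK f) {r : ℝ} (hr : 0 < r) : 0 < f r :=
  hf.2.2.symm.trans_lt (hf.2.1 self_mem_Ici hr.le hr)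

theorem comp {f g : ℝ → ℝ} (hf : ClassK f) (hg : ClassK g) : ClassK fun r => f (g r) :=
  ⟨hf.1.comp hg.1 hg.mapsTo, hf.2.1.comp hg.2.1 hg.mapsTo, by simp only [hg.2.2, hf.2.2]⟩

theorem map_max_le_add {f : ℝ → ℝ} (hf : ClassK f) {a b : ℝ} (ha : 0 ≤ a) (hb : 0 ≤ b) :
    f (max a b) ≤ f a + f b :=
  (hf.2.1.monotoneOn.map_max ha hb).trans_le (max_le_add_of_nonneg (hf.nonneg ha) (hf.nonneg hb))

end ClassK

namespace ClassKinf

theorem surjOn {f : ℝ → ℝ} (hf : ClassKinf f) : SurjOn f (Ici 0) (Ici 0) := by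
  intro y hy
  obtain ⟨r, hr, hyr⟩ := hf.2 y
  obtain ⟨s, hs, rfl⟩ := intermediate_value_Icc hr (hf.1.1.mono Icc_subset_Ici_self)
    ⟨hf.1.2.2.trans_le hy, hyr.le⟩
  exact ⟨s, hs.1, rfl⟩

theorem exists_classK_leftInvOn {f : ℝ → ℝ} (hf : ClassKinf f) :
    ∃ g, ClassK g ∧ LeftInvOn g f (Ici 0) := by
  let e : Ici (0 : ℝ) ≃o Ici (0 : ℝ) :=
    StrictMono.orderIsoOfSurjective (hf.1.mapsTo.restrict f _ _)
      (fun a b hab => hf.1.2.1 a.2 b.2 hab) ((MapsTo.restrict_surjective_iff _).2 hf.surjOn)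
  let g : ℝ → ℝ := fun y => e.symm (projIci 0 y)
  have hgf : LeftInvOn g f (Ici 0) := fun r hr => by
    have hproj : projIci 0 (f r) = e ⟨r, hr⟩ := projIci_of_mem (hf.1.mapsTo hr)
    simp only [g, hproj, OrderIso.symm_apply_apply]
  refine ⟨g, ⟨?_, ?_, ?_⟩, hgf⟩
  · have hproj : Continuous (projIci (0 : ℝ)) :=
      (continuous_const.max continuous_id).subtype_mk _
    exact (continuous_subtype_val.comp (e.symm.continuous.comp hproj)).continuousOn
  · exact fun a ha b hb hab => e.symm.strictMono (strictMonoOn_projIci ha hb hab)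
  · simpa only [hf.1.2.2] using hgf self_mem_Ici

end ClassKinf

theorem ClassKL.comp {β : ℝ → ℝ → ℝ} {f g : ℝ → ℝ} (hβ : ClassKL β) (hf : ClassK f)
    (hg : ClassK g) : ClassKL fun r t => f (β (g r) t) := by
  refine ⟨fun t ht => hf.comp ((hβ.1 t ht).comp hg), fun r hr => ?_⟩
  obtain ⟨hcont, hanti, hlim⟩ := hβ.2 (g r) (hg.pos hr)
  have hmaps : MapsTo (β (g r)) (Ici 0) (Ici 0) :=
    fun t ht => (hβ.1 t ht).nonneg (hg.nonneg hr.le)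
  refine ⟨hf.1.comp hcont hmaps, fun s hs t ht hst =>
    hf.2.1.monotoneOn (hmaps ht) (hmaps hs) (hanti hs ht hst), ?_⟩
  have hlim' : Tendsto (β (g r)) atTop (𝓝[≥] 0) :=
    tendsto_nhdsWithin_iff.2 ⟨hlim, (eventually_ge_atTop 0).mono hmaps⟩
  have hlim_f : Tendsto f (𝓝[≥] 0) (𝓝 0) := by
    simpa only [hf.2.2] using (hf.1 0 self_mem_Ici).tendsto
  exact hlim_f.comp hlim'

theorem classKL_exp_neg_mul : ClassKL fun r t => Real.exp (-t) * r := by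
  refine ⟨fun t _ => ⟨by fun_prop, ?_, mul_zero _⟩, fun r hr => ⟨by fun_prop, ?_, ?_⟩⟩
  · exact (strictMono_mul_left_of_pos (Real.exp_pos _)).strictMonoOn _
  · intro s _ t _ hst
    dsimp only
    gcongr
  · simpa only [zero_mul] using Real.tendsto_exp_neg_atTop_nhds_zero.mul_const r

section Inputs

variable {U : Type*} [NormedAddCommGroup U] {u : ℝ → U} {r : ℝ}

theorem inputNorm_nonneg (u : ℝ → U) : 0 ≤ inputNorm u :=
  Real.sSup_nonneg (forall_mem_image.2 fun _ _ => norm_nonneg _)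

theorem image_norm_shift_subset (u : ℝ → U) (hr : 0 ≤ r) :
    (fun s => ‖u (s + r)‖) '' Ici 0 ⊆ (fun s => ‖u s‖) '' Ici 0 :=
  image_subset_iff.2 fun s hs => ⟨s + r, add_nonneg hs hr, rfl⟩

theorem IsInput.shift (hu : IsInput u) (hr : 0 ≤ r) : IsInput fun τ => u (τ + r) :=
  ⟨hu.1.comp (by fun_prop) fun _ hs => add_nonneg hs hr,
    hu.2.mono (image_norm_shift_subset u hr)⟩

theorem IsInput.inputNorm_shift_le (hu : IsInput u) (hr : 0 ≤ r) :
    inputNorm (fun τ => u (τ + r)) ≤ inputNorm u :=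
  csSup_le_csSup hu.2 (nonempty_Ici.image _) (image_norm_shift_subset u hr)

end Inputs

section DiniDerivatives

-- A real `limsup` of a family unbounded above is the junk value `0`; a negative one is genuine.
theorem eventually_lt_of_limsup_lt_of_nonpos {ι : Type*} {f : ι → ℝ} {l : Filter ι} {a : ℝ}
    (h : limsup f l < a) (ha : a ≤ 0) : ∀ᶠ i in l, f i < a := by
  refine eventually_lt_of_limsup_lt h ?_
  by_contra hunbdd
  exact (h.trans_le ha).ne (Real.limsup_of_not_isBoundedUnder hunbdd)

theorem eventually_slope_lt_of_limsup_lt {y : ℝ → ℝ} {s a : ℝ}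
    (h : limsup (fun t => (y (t + s) - y s) / t) (𝓝[>] 0) < a) (ha : a ≤ 0) :
    ∀ᶠ z in 𝓝[>] s, slope y s z < a := by
  have hsub : Tendsto (fun z => z - s) (𝓝[>] s) (𝓝[>] 0) := by
    have hcont : ContinuousWithinAt (fun z => z - s) (Ioi s) s := by fun_prop
    simpa only [sub_self] using
      hcont.tendsto_nhdsWithin (t := Ioi (s - s)) fun z hz => sub_lt_sub_right hz s
  filter_upwards [hsub.eventually (eventually_lt_of_limsup_lt_of_nonpos h ha)] with z hz
  rwa [sub_add_cancel, ← slope_def_field] at hz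

-- Replace `y` by the line of slope `c` above it and use the chain rule for that line.
theorem eventually_slope_comp_lt {G y : ℝ → ℝ} {D : Set ℝ} {G' c r x : ℝ}
    (hG : MonotoneOn G D) (hD : D ∈ 𝓝 (y x)) (hG' : HasDerivAt G G' (y x))
    (hy : ContinuousWithinAt y (Ioi x) x) (hslope : ∀ᶠ z in 𝓝[>] x, slope y x z ≤ c)
    (hr : G' * c < r) : ∀ᶠ z in 𝓝[>] x, slope (fun t => G (y t)) x z < r := by
  let line : ℝ → ℝ := fun z => y x + c * (z - x)
  have hline_x : line x = y x := by simp [line]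
  have hline : HasDerivAt line c x := by
    simpa only [id, mul_one] using
      (((hasDerivAt_id x).sub_const x).const_mul c).const_add (y x)
  have hGline : HasDerivAt (fun z => G (line z)) (G' * c) x :=
    HasDerivAt.comp x (by rwa [hline_x]) hline
  have hline_mem : ∀ᶠ z in 𝓝[>] x, line z ∈ D :=
    nhdsWithin_le_nhds (hline.continuousAt.preimage_mem_nhds (by rwa [hline_x]))
  have hline_slope : ∀ᶠ z in 𝓝[>] x, slope (fun z => G (line z)) x z < r :=
    (hasDerivWithinAt_iff_tendsto_slope' self_notMem_Ioi).1 hGline.hasDerivWithinAt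
      |>.eventually_lt_const hr
  filter_upwards [hslope, hline_mem, hline_slope, hy.preimage_mem_nhdsWithin hD,
    self_mem_nhdsWithin] with z hz hz_line hz_slope hz_mem hxz
  have hxz' : 0 < z - x := sub_pos.2 hxz
  have hyz : y z ≤ line z := by
    rw [slope_def_field, div_le_iff₀ hxz'] at hz
    simp only [line]
    linarith
  refine lt_of_le_of_lt ?_ hz_slope
  rw [slope_def_field, slope_def_field, hline_x]
  gcongr
  exact hG hz_mem hz_line hyz

theorem le_of_le_left_of_eventually_slope_neg {y : ℝ → ℝ} {a b c : ℝ} (hab : a ≤ b)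
    (hy : ContinuousOn y (Icc a b)) (hya : y a ≤ c)
    (hslope : ∀ t ∈ Ico a b, c < y t → ∀ᶠ z in 𝓝[>] t, slope y t z < 0) : y b ≤ c := by
  refine le_of_forall_pos_le_add fun ε hε => ?_
  suffices Icc a b ⊆ {t | y t ≤ c + ε} from this (right_mem_Icc.2 hab)
  refine IsClosed.Icc_subset_of_forall_mem_nhdsWithin ?_
    (le_add_of_le_of_nonneg hya hε.le) ?_
  · rw [inter_comm]
    exact hy.preimage_isClosed_of_isClosed isClosed_Icc isClosed_Iic
  rintro t ⟨hyt : y t ≤ c + ε, ht⟩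
  rcases lt_or_eq_of_le hyt with hlt | heq_level
  · have hcont : ContinuousWithinAt y (Ioi t) t :=
      ((hy t (Ico_subset_Icc_self ht)).mono_of_mem_nhdsWithin (Icc_mem_nhdsGT_of_mem ht))
    exact (hcont.eventually_lt_const hlt).mono fun z hz => hz.le
  · filter_upwards [hslope t ht (by linarith), self_mem_nhdsWithin] with z hz htz
    have hyz : y z < y t := by
      rw [slope_def_field, div_lt_iff₀ (sub_pos.2 htz)] at hz
      linarith
    exact (hyz.trans_eq heq_level).le

end DiniDerivatives

section TravelTime

/-- The time that a solution of `v' = k v` needs to travel from `1` to `v`, negative for `v < 1`. -/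
noncomputable def travelTime (k : ℝ → ℝ) (v : ℝ) : ℝ :=
  ∫ w in (1 : ℝ)..v, (k w)⁻¹

/-- The exponential of the travel time, extended by `0` to the equilibrium `0` (and below); it
turns decay at rate `k` into exponential decay at unit rate. -/
noncomputable def expTravelTime (k : ℝ → ℝ) (v : ℝ) : ℝ :=
  if 0 < v then Real.exp (travelTime k v) else 0

variable {k : ℝ → ℝ} {v : ℝ}

theorem expTravelTime_of_pos (hv : 0 < v) : expTravelTime k v = Real.exp (travelTime k v) :=
  if_pos hv

theorem expTravelTime_zero : expTravelTime k 0 = 0 :=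
  if_neg (lt_irrefl 0)

theorem expTravelTime_nonneg : 0 ≤ expTravelTime k v := by
  unfold expTravelTime
  positivity

theorem hasDerivAt_travelTime (hk : ContinuousOn k (Ioi 0)) (hk_pos : ∀ w > 0, 0 < k w)
    (hv : 0 < v) : HasDerivAt (travelTime k) (k v)⁻¹ v := by
  have hinv : ContinuousOn (fun w => (k w)⁻¹) (Ioi 0) := hk.inv₀ fun w hw => (hk_pos w hw).ne'
  have hsub : uIcc 1 v ⊆ Ioi 0 := fun w hw => (lt_min one_pos hv).trans_le hw.1
  exact intervalIntegral.integral_hasDerivAt_right (hinv.mono hsub).intervalIntegrable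
    (hinv.stronglyMeasurableAtFilter isOpen_Ioi v hv) (hinv.continuousAt (Ioi_mem_nhds hv))

theorem strictMonoOn_travelTime (hk : ContinuousOn k (Ioi 0)) (hk_pos : ∀ w > 0, 0 < k w) :
    StrictMonoOn (travelTime k) (Ioi 0) := by
  have hderiv := fun w (hw : 0 < w) => hasDerivAt_travelTime hk hk_pos hw
  refine strictMonoOn_of_deriv_pos (convex_Ioi 0)
    (fun w hw => (hderiv w hw).continuousAt.continuousWithinAt) fun w hw => ?_
  rw [interior_Ioi] at hw
  rw [(hderiv w hw).deriv]
  exact inv_pos.2 (hk_pos w hw)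

theorem monotoneOn_travelTime_sub_log (hk : ContinuousOn k (Ioi 0)) (hk_pos : ∀ w > 0, 0 < k w)
    (hk_le : ∀ w > 0, k w ≤ w) : MonotoneOn (fun w => travelTime k w - Real.log w) (Ioi 0) := by
  have hderiv : ∀ w > 0,
      HasDerivAt (fun w => travelTime k w - Real.log w) ((k w)⁻¹ - w⁻¹) w := fun w hw =>
    (hasDerivAt_travelTime hk hk_pos hw).sub (Real.hasDerivAt_log hw.ne')
  refine monotoneOn_of_hasDerivWithinAt_nonneg (convex_Ioi 0)
    (fun w hw => (hderiv w hw).continuousAt.continuousWithinAt)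
    (fun w hw => (hderiv w (interior_subset hw)).hasDerivWithinAt) fun w hw => ?_
  have hw' : 0 < w := interior_subset hw
  exact sub_nonneg.2 (inv_anti₀ (hk_pos w hw') (hk_le w hw'))

theorem expTravelTime_le_self (hk : ContinuousOn k (Ioi 0)) (hk_pos : ∀ w > 0, 0 < k w)
    (hk_le : ∀ w > 0, k w ≤ w) (hv : 0 < v) (hv_one : v ≤ 1) : expTravelTime k v ≤ v := by
  have h := monotoneOn_travelTime_sub_log hk hk_pos hk_le hv (mem_Ioi.2 one_pos) hv_one
  simp only [travelTime, intervalIntegral.integral_same, Real.log_one, sub_zero, sub_nonpos] at h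
  rw [expTravelTime_of_pos hv]
  exact (Real.le_log_iff_exp_le hv).1 h

theorem self_le_expTravelTime (hk : ContinuousOn k (Ioi 0)) (hk_pos : ∀ w > 0, 0 < k w)
    (hk_le : ∀ w > 0, k w ≤ w) (hv : 1 ≤ v) : v ≤ expTravelTime k v := by
  have hv_pos : 0 < v := one_pos.trans_le hv
  have h := monotoneOn_travelTime_sub_log hk hk_pos hk_le (mem_Ioi.2 one_pos) hv_pos hv
  simp only [travelTime, intervalIntegral.integral_same, Real.log_one, sub_zero, sub_nonneg] at h
  rw [expTravelTime_of_pos hv_pos]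
  exact (Real.log_le_iff_le_exp hv_pos).1 h

theorem continuousOn_expTravelTime (hk : ContinuousOn k (Ioi 0)) (hk_pos : ∀ w > 0, 0 < k w)
    (hk_le : ∀ w > 0, k w ≤ w) : ContinuousOn (expTravelTime k) (Ici 0) := by
  intro v hv
  rcases eq_or_lt_of_le (mem_Ici.1 hv) with rfl | hv
  · have hid : Tendsto (fun w : ℝ => w) (𝓝[≥] 0) (𝓝 0) := tendsto_id.mono_left nhdsWithin_le_nhds
    have hle : ∀ᶠ w in 𝓝[≥] 0, expTravelTime k w ≤ w := by
      filter_upwards [Icc_mem_nhdsGE one_pos] with w hw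
      rcases eq_or_lt_of_le hw.1 with rfl | hw_pos
      · exact expTravelTime_zero.le
      · exact expTravelTime_le_self hk hk_pos hk_le hw_pos hw.2
    rw [ContinuousWithinAt, expTravelTime_zero]
    exact squeeze_zero' (Eventually.of_forall fun _ => expTravelTime_nonneg) hle hid
  · have hexp : ContinuousAt (fun w => Real.exp (travelTime k w)) v :=
      (hasDerivAt_travelTime hk hk_pos hv).continuousAt.rexp
    refine (hexp.congr ?_).continuousWithinAt
    filter_upwards [Ioi_mem_nhds hv] with w hw using (expTravelTime_of_pos hw).symm

theorem classKinf_expTravelTime (hk : ContinuousOn k (Ioi 0)) (hk_pos : ∀ w > 0, 0 < k w)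
    (hk_le : ∀ w > 0, k w ≤ w) : ClassKinf (expTravelTime k) := by
  refine ⟨⟨continuousOn_expTravelTime hk hk_pos hk_le, ?_, expTravelTime_zero⟩, fun M => ?_⟩
  · intro a ha b _ hab
    have hb : 0 < b := lt_of_le_of_lt ha hab
    rw [expTravelTime_of_pos hb]
    rcases eq_or_lt_of_le (mem_Ici.1 ha) with rfl | ha
    · rw [expTravelTime_zero]
      positivity
    · rw [expTravelTime_of_pos ha]
      exact Real.exp_lt_exp.2 (strictMonoOn_travelTime hk hk_pos ha hb hab)
  · have hone : 1 ≤ max 1 (M + 1) := le_max_left _ _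
    refine ⟨max 1 (M + 1), zero_le_one.trans hone, ?_⟩
    calc M < M + 1 := lt_add_one M
      _ ≤ max 1 (M + 1) := le_max_right _ _
      _ ≤ expTravelTime k (max 1 (M + 1)) := self_le_expTravelTime hk hk_pos hk_le hone

end TravelTime

section Comparison

variable {k : ℝ → ℝ}

theorem travelTime_le_sub_of_slope_lt {y : ℝ → ℝ} {a b : ℝ} (hk : ContinuousOn k (Ioi 0))
    (hk_pos : ∀ w > 0, 0 < k w) (hab : a ≤ b) (hy : ContinuousOn y (Icc a b))
    (hy_pos : ∀ t ∈ Icc a b, 0 < y t)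
    (hslope : ∀ t ∈ Ico a b, ∀ᶠ z in 𝓝[>] t, slope y t z < -k (y t)) :
    travelTime k (y b) ≤ travelTime k (y a) - (b - a) := by
  have hderiv := fun w (hw : 0 < w) => hasDerivAt_travelTime hk hk_pos hw
  have hcont : ContinuousOn (fun t => travelTime k (y t)) (Icc a b) := fun t ht =>
    (hderiv _ (hy_pos t ht)).continuousAt.comp_continuousWithinAt (hy t ht)
  refine image_le_of_liminf_slope_right_le_deriv_boundary hcont
    (B := fun t => travelTime k (y a) - (t - a)) (B' := fun _ => -1) (by simp) (by fun_prop)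
    (fun t _ => (((hasDerivAt_id t).sub_const a).const_sub _).hasDerivWithinAt) ?_
    (right_mem_Icc.2 hab)
  intro t ht r hr
  have hyt : 0 < y t := hy_pos t (Ico_subset_Icc_self ht)
  have hy_right : ContinuousWithinAt y (Ioi t) t :=
    (hy t (Ico_subset_Icc_self ht)).mono_of_mem_nhdsWithin (Icc_mem_nhdsGT_of_mem ht)
  refine (eventually_slope_comp_lt (strictMonoOn_travelTime hk hk_pos).monotoneOn
    (Ioi_mem_nhds hyt) (hderiv _ hyt) hy_right ((hslope t ht).mono fun z hz => hz.le) ?_).frequently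
  rwa [mul_neg, inv_mul_cancel₀ (hk_pos _ hyt).ne']

theorem expTravelTime_le_of_slope_lt {y : ℝ → ℝ} {T : ℝ} (hk : ContinuousOn k (Ioi 0))
    (hk_pos : ∀ w > 0, 0 < k w) (hT : 0 ≤ T) (hy : ContinuousOn y (Icc 0 T))
    (hy_pos : ∀ t ∈ Icc 0 T, 0 < y t)
    (hslope : ∀ t ∈ Ico 0 T, ∀ᶠ z in 𝓝[>] t, slope y t z < -k (y t)) :
    expTravelTime k (y T) ≤ Real.exp (-T) * expTravelTime k (y 0) := by
  have htime := travelTime_le_sub_of_slope_lt hk hk_pos hT hy hy_pos hslope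
  rw [expTravelTime_of_pos (hy_pos T (right_mem_Icc.2 hT)),
    expTravelTime_of_pos (hy_pos 0 (left_mem_Icc.2 hT)), ← Real.exp_add]
  exact Real.exp_le_exp.2 (by linarith)

theorem exists_classKL_forall_le_max (hk : ContinuousOn k (Ioi 0)) (hk_pos : ∀ w > 0, 0 < k w) :
    ∃ β, ClassKL β ∧ ∀ (y : ℝ → ℝ) (c T : ℝ), 0 ≤ c → 0 ≤ T → ContinuousOn y (Icc 0 T) →
      (∀ t ∈ Ico 0 T, c < y t → ∀ᶠ z in 𝓝[>] t, slope y t z < -k (y t)) →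
      y T ≤ max (β (y 0) T) c := by
  -- Capping the rate by the identity keeps the travel time to `0` and to `∞` infinite.
  let k' : ℝ → ℝ := fun w => min (k w) w
  have hk' : ContinuousOn k' (Ioi 0) := hk.inf continuousOn_id
  have hk'_pos : ∀ w > 0, 0 < k' w := fun w hw => lt_min (hk_pos w hw) hw
  have hW := classKinf_expTravelTime hk' hk'_pos fun w _ => min_le_right _ _
  obtain ⟨g, hg, hgW⟩ := hW.exists_classK_leftInvOn
  refine ⟨fun v t => g (Real.exp (-t) * expTravelTime k' v),
    classKL_exp_neg_mul.comp hg hW.1, fun y c T hc hT hy hslope => ?_⟩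
  rcases le_or_gt (y T) c with hle | hgt
  · exact hle.trans (le_max_right _ _)
  have habove : ∀ t ∈ Icc 0 T, c < y t := by
    intro t ht
    by_contra! hle
    refine hgt.not_ge (le_of_le_left_of_eventually_slope_neg ht.2
      (hy.mono (Icc_subset_Icc_left ht.1)) hle fun s hs hcs => ?_)
    filter_upwards [hslope s ⟨ht.1.trans hs.1, hs.2⟩ hcs] with z hz
    exact hz.trans (neg_neg_of_pos (hk_pos _ (hc.trans_lt hcs)))
  have hdecay : expTravelTime k' (y T) ≤ Real.exp (-T) * expTravelTime k' (y 0) := by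
    refine expTravelTime_le_of_slope_lt hk' hk'_pos hT hy
      (fun t ht => hc.trans_lt (habove t ht)) fun t ht => ?_
    filter_upwards [hslope t ht (habove t (Ico_subset_Icc_self ht))] with z hz
    exact hz.trans_le (neg_le_neg (min_le_left _ _))
  refine le_max_of_le_left ?_
  calc y T = g (expTravelTime k' (y T)) := (hgW (hc.trans hgt.le)).symm
    _ ≤ g (Real.exp (-T) * expTravelTime k' (y 0)) :=
      hg.2.1.monotoneOn expTravelTime_nonneg
        (mul_nonneg (Real.exp_pos _).le expTravelTime_nonneg) hdecay

end Comparison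

section DecayRate

theorem exists_continuousOn_forall_mem_convex_of_local_const {S E : Type*} [TopologicalSpace S]
    [AddCommGroup E] [Module ℝ E] [TopologicalSpace E] [ContinuousAdd E] [ContinuousSMul ℝ E]
    {s : Set S} [NormalSpace s] [ParacompactSpace s] {C : S → Set E}
    (hC : ∀ x ∈ s, Convex ℝ (C x)) (hlocal : ∀ x ∈ s, ∃ c, ∀ᶠ y in 𝓝[s] x, c ∈ C y) :
    ∃ k : S → E, ContinuousOn k s ∧ ∀ x ∈ s, k x ∈ C x := by
  classical
  obtain ⟨g, hg⟩ := exists_continuous_forall_mem_convex_of_local_const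
    (t := fun x : s => C x) (fun x => hC x x.2) fun x => by
      obtain ⟨c, hc⟩ := hlocal x x.2
      exact ⟨c, (eventually_nhds_subtype_iff s x _).2 hc⟩
  refine ⟨fun x => if hx : x ∈ s then g ⟨x, hx⟩ else 0, ?_, fun x hx => ?_⟩
  · rw [continuousOn_iff_continuous_domRestrict]
    refine g.continuous.congr fun x => ?_
    simp
  · simpa only [dif_pos hx] using hg ⟨x, hx⟩

variable {ψ₁ ψ₂ α : ℝ → ℝ}

theorem exists_pos_forall_lt_of_sandwich (hψ₁ : ClassKinf ψ₁) (hψ₂ : ClassK ψ₂)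
    (hα : ContinuousOn α (Ioi 0)) (hα_pos : ∀ r > 0, 0 < α r) {a : ℝ} (ha : 0 < a) (b : ℝ) :
    ∃ d > 0, ∀ s ≥ 0, ψ₁ s ≤ b → a ≤ ψ₂ s → d ≤ α s := by
  obtain ⟨R, hR, hbR⟩ := hψ₁.2 b
  obtain ⟨r, hra, hr⟩ : ∃ r, ψ₂ r < a ∧ 0 < r := by
    have hlt : ∀ᶠ r in 𝓝[≥] 0, ψ₂ r < a :=
      (hψ₂.1 0 self_mem_Ici).eventually_lt_const (by rwa [hψ₂.2.2])
    exact ((hlt.filter_mono (nhdsWithin_mono _ Ioi_subset_Ici_self)).and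
      self_mem_nhdsWithin).exists
  have hpos : ∀ s ∈ Icc r R, 0 < s := fun s hs => hr.trans_le hs.1
  obtain ⟨d, hd, hd_le⟩ := isCompact_Icc.exists_forall_le' (hα.mono hpos)
    fun s hs => hα_pos s (hpos s hs)
  refine ⟨d, hd, fun s hs hsb has => hd_le s ⟨?_, ?_⟩⟩
  · exact ((hψ₂.2.1.lt_iff_lt hr.le hs).1 (hra.trans_le has)).le
  · exact ((hψ₁.1.2.1.lt_iff_lt hs hR).1 (hsb.trans_lt hbR)).le

theorem exists_continuousOn_pos_lt_of_sandwich (hψ₁ : ClassKinf ψ₁) (hψ₂ : ClassK ψ₂)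
    (hα : ContinuousOn α (Ioi 0)) (hα_pos : ∀ r > 0, 0 < α r) :
    ∃ k : ℝ → ℝ, ContinuousOn k (Ioi 0) ∧ (∀ v > 0, 0 < k v) ∧
      ∀ v > 0, ∀ s ≥ 0, ψ₁ s ≤ v → v ≤ ψ₂ s → k v < α s := by
  let C : ℝ → Set ℝ := fun v => {w | 0 < w ∧ ∀ s ≥ 0, ψ₁ s ≤ v → v ≤ ψ₂ s → w < α s}
  have hC : ∀ v ∈ Ioi 0, Convex ℝ (C v) := fun v _ =>
    OrdConnected.convex ⟨fun a ha b hb w hw => ⟨ha.1.trans_le hw.1,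
      fun s hs h₁ h₂ => hw.2.trans_lt (hb.2 s hs h₁ h₂)⟩⟩
  have hlocal : ∀ v ∈ Ioi (0 : ℝ), ∃ c, ∀ᶠ w in 𝓝[Ioi 0] v, c ∈ C w := by
    intro v (hv : 0 < v)
    obtain ⟨d, hd, hd_le⟩ :=
      exists_pos_forall_lt_of_sandwich hψ₁ hψ₂ hα hα_pos (half_pos hv) (v + 1)
    refine ⟨d / 2, nhdsWithin_le_nhds ?_⟩
    filter_upwards [Ioo_mem_nhds (half_lt_self hv) (lt_add_one v)] with w hw
    exact ⟨half_pos hd, fun s hs h₁ h₂ => (half_lt_self hd).trans_le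
      (hd_le s hs (h₁.trans hw.2.le) (hw.1.le.trans h₂))⟩
  obtain ⟨k, hk, hkC⟩ := exists_continuousOn_forall_mem_convex_of_local_const hC hlocal
  exact ⟨k, hk, fun v hv => (hkC v hv).1, fun v hv => (hkC v hv).2⟩

end DecayRate

section Lyapunov

variable {X U : Type*} [SeminormedAddGroup X] [NormedAddCommGroup U]

theorem eventually_slope_lyapunov_lt {φ : ℝ → X → (ℝ → U) → X} {V : X → ℝ}
    {ψ₁ ψ₂ χ α k : ℝ → ℝ} {x : X} {u : ℝ → U} {s : ℝ} (hψ₂ : ClassK ψ₂) (hχ : ClassK χ)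
    (hk_pos : ∀ v > 0, 0 < k v) (hkα : ∀ v > 0, ∀ r ≥ 0, ψ₁ r ≤ v → v ≤ ψ₂ r → k v < α r)
    (hcoc : ∀ t ≥ 0, φ (t + s) x u = φ t (φ s x u) (fun τ => u (τ + s)))
    (hsandwich : ∀ x : X, ψ₁ ‖x‖ ≤ V x ∧ V x ≤ ψ₂ ‖x‖)
    (hdiss : ∀ (x : X) (u : ℝ → U), IsInput u → χ (inputNorm u) ≤ ‖x‖ →
      limsup (fun t => (V (φ t x u) - V x) / t) (𝓝[>] 0) ≤ -α ‖x‖)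
    (hu : IsInput u) (hs : 0 ≤ s) (hV : ψ₂ (χ (inputNorm u)) < V (φ s x u)) :
    ∀ᶠ z in 𝓝[>] s, slope (fun t => V (φ t x u)) s z < -k (V (φ s x u)) := by
  obtain ⟨hlower, hupper⟩ := hsandwich (φ s x u)
  have hχ_nonneg : 0 ≤ χ (inputNorm u) := hχ.nonneg (inputNorm_nonneg u)
  have hV_pos : 0 < V (φ s x u) := (hψ₂.nonneg hχ_nonneg).trans_lt hV
  have hχ_shift : χ (inputNorm fun τ => u (τ + s)) ≤ ‖φ s x u‖ :=
    (hχ.2.1.monotoneOn (inputNorm_nonneg _) (inputNorm_nonneg _)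
      (hu.inputNorm_shift_le hs)).trans
      ((hψ₂.2.1.lt_iff_lt hχ_nonneg (norm_nonneg _)).1 (hV.trans_le hupper)).le
  have hlimsup : limsup (fun t => (V (φ (t + s) x u) - V (φ s x u)) / t) (𝓝[>] 0)
      ≤ -α ‖φ s x u‖ := by
    refine (limsup_congr ?_).trans_le (hdiss (φ s x u) _ (hu.shift hs) hχ_shift)
    filter_upwards [self_mem_nhdsWithin] with t ht
    rw [hcoc t (le_of_lt ht)]
  have hrate : k (V (φ s x u)) < α ‖φ s x u‖ :=
    hkα _ hV_pos _ (norm_nonneg _) hlower hupper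
  exact eventually_slope_lt_of_limsup_lt (y := fun t => V (φ t x u))
    (hlimsup.trans_lt (neg_lt_neg hrate)) (neg_nonpos.2 (hk_pos _ hV_pos).le)

theorem stmt6_general (φ : ℝ → X → (ℝ → U) → X)
    (hid : ∀ (x : X) (u : ℝ → U), IsInput u → φ 0 x u = x)
    (hcont : ∀ (x : X) (u : ℝ → U), IsInput u → ContinuousOn (fun t => φ t x u) (Ici 0))
    (hcoc : ∀ t ≥ (0 : ℝ), ∀ r ≥ (0 : ℝ), ∀ (x : X) (u : ℝ → U), IsInput u →
      φ (t + r) x u = φ t (φ r x u) (fun τ => u (τ + r)))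
    (V : X → ℝ) (hVc : Continuous V)
    (ψ₁ ψ₂ : ℝ → ℝ) (hψ₁ : ClassKinf ψ₁) (hψ₂ : ClassK ψ₂)
    (χ : ℝ → ℝ) (hχ : ClassK χ)
    (α : ℝ → ℝ) (hα : ContinuousOn α (Ioi 0)) (hα_pos : ∀ r > 0, 0 < α r)
    (hsandwich : ∀ x : X, ψ₁ ‖x‖ ≤ V x ∧ V x ≤ ψ₂ ‖x‖)
    (hdiss : ∀ (x : X) (u : ℝ → U), IsInput u → χ (inputNorm u) ≤ ‖x‖ →
      limsup (fun t => (V (φ t x u) - V x) / t) (𝓝[>] 0) ≤ -α ‖x‖) :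
    ∃ β γ, ClassKL β ∧ ClassK γ ∧
      ∀ (x : X) (u : ℝ → U), IsInput u → ∀ t ≥ (0 : ℝ),
        ‖φ t x u‖ ≤ β ‖x‖ t + γ (inputNorm u) := by
  obtain ⟨k, hk, hk_pos, hkα⟩ := exists_continuousOn_pos_lt_of_sandwich hψ₁ hψ₂ hα hα_pos
  obtain ⟨β, hβ, hβ_max⟩ := exists_classKL_forall_le_max hk hk_pos
  obtain ⟨κ, hκ, hκψ₁⟩ := hψ₁.exists_classK_leftInvOn
  have hV_nonneg : ∀ x, 0 ≤ V x := fun x =>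
    (hψ₁.1.nonneg (norm_nonneg x)).trans (hsandwich x).1
  refine ⟨fun r t => κ (β (ψ₂ r) t), fun r => κ (ψ₂ (χ r)), hβ.comp hκ hψ₂,
    hκ.comp (hψ₂.comp hχ), fun x u hu t ht => ?_⟩
  let c := ψ₂ (χ (inputNorm u))
  have hc : 0 ≤ c := (hψ₂.comp hχ).nonneg (inputNorm_nonneg u)
  have hβ_nonneg : 0 ≤ β (ψ₂ ‖x‖) t := (hβ.1 t ht).nonneg (hψ₂.nonneg (norm_nonneg x))
  have hVt : V (φ t x u) ≤ max (β (V x) t) c := by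
    simpa only [hid x u hu] using hβ_max (fun s => V (φ s x u)) c t hc ht
      (hVc.comp_continuousOn ((hcont x u hu).mono Icc_subset_Ici_self)) fun s hs =>
        eventually_slope_lyapunov_lt hψ₂ hχ hk_pos hkα (fun t ht => hcoc t ht s hs.1 x u hu)
          hsandwich hdiss hu hs.1
  have hβ_mono : β (V x) t ≤ β (ψ₂ ‖x‖) t :=
    (hβ.1 t ht).2.1.monotoneOn (hV_nonneg x) (hψ₂.nonneg (norm_nonneg x)) (hsandwich x).2
  calc ‖φ t x u‖ = κ (ψ₁ ‖φ t x u‖) := (hκψ₁ (norm_nonneg _)).symm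
    _ ≤ κ (max (β (ψ₂ ‖x‖) t) c) :=
      hκ.2.1.monotoneOn (hψ₁.1.nonneg (norm_nonneg _)) (le_max_of_le_right hc)
        ((hsandwich _).1.trans (hVt.trans (max_le_max_right c hβ_mono)))
    _ ≤ κ (β (ψ₂ ‖x‖) t) + κ c := hκ.map_max_le_add hβ_nonneg hc

end Lyapunov

/-- If the control system `φ` (with bounded continuous inputs, identity, continuity and cocycle
properties, and equilibrium at `0`) possesses an ISS-Lyapunov function `V`, then it is ISS. -/
theorem stmt6 {X U : Type*} [NormedAddCommGroup X] [NormedSpace ℝ X]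
    [NormedAddCommGroup U] [NormedSpace ℝ U]
    (φ : ℝ → X → (ℝ → U) → X)
    (hid : ∀ (x : X) (u : ℝ → U), IsInput u → φ 0 x u = x)
    (hcont : ∀ (x : X) (u : ℝ → U), IsInput u → ContinuousOn (fun t => φ t x u) (Ici 0))
    (hcoc : ∀ t ≥ (0:ℝ), ∀ r ≥ (0:ℝ), ∀ (x : X) (u : ℝ → U), IsInput u →
        φ (t + r) x u = φ t (φ r x u) (fun τ => u (τ + r)))
    (heq : ∀ t ≥ (0:ℝ), φ t 0 (fun _ => 0) = 0)
    (V : X → ℝ) (hVc : Continuous V) (hVnn : ∀ x : X, 0 ≤ V x)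
    (ψ₁ ψ₂ : ℝ → ℝ) (hψ₁ : ClassKinf ψ₁) (hψ₂ : ClassKinf ψ₂)
    (χ : ℝ → ℝ) (hχ : ClassK χ)
    (α : ℝ → ℝ) (hα : PosDef α)
    (hsandwich : ∀ x : X, ψ₁ ‖x‖ ≤ V x ∧ V x ≤ ψ₂ ‖x‖)
    (hdiss : ∀ (x : X) (u : ℝ → U), IsInput u → χ (inputNorm u) ≤ ‖x‖ →
        limsup (fun t => (V (φ t x u) - V x) / t) (nhdsWithin 0 (Ioi 0)) ≤ -α ‖x‖) :
    ∃ β γ, ClassKL β ∧ ClassK γ ∧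
      ∀ (x : X) (u : ℝ → U), IsInput u → ∀ t ≥ (0:ℝ),
        ‖φ t x u‖ ≤ β ‖x‖ t + γ (inputNorm u) := by
  exact stmt6_general φ hid hcont hcoc V hVc ψ₁ ψ₂ hψ₁ hψ₂.1 χ hχ α
    (hα.1.mono Ioi_subset_Ici_self) hα.2.2 hsandwich hdiss
end

section
/- Let X be a normed linear space, U_c a normed linear space (of input functions), and φ : [0,∞) × X × U_c → X a transition map that depends continuously on initial states and inputs, uniformly on compact time intervals: for all x ∈ X, u ∈ U_c, T > 0 and ε > 0 there exists δ > 0 such that ‖x − x′‖_X < δ and ‖u − u′‖_{U_c} < δ imply ‖φ(t,x,u) − φ(t,x′,u′)‖_X < ε for all t ∈ [0,T]. Let X̂ ⊆ X and Û_c ⊆ U_c be dense subsets, and suppose there exist β of class KL and γ of class K such that ‖φ(t,x,u)‖_X ≤ β(‖x‖_X, t) + γ(‖u‖_{U_c}) for all x ∈ X̂, u ∈ Û_c and t ≥ 0. Then the same estimate holds, with the same β and γ, for all x ∈ X, u ∈ U_c and t ≥ 0. -/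
open Filter Set

/-!
At a fixed time `t`, both sides of the ISS estimate are continuous in `x` for fixed `u` and
continuous in `u` for fixed `x`, and a non-strict inequality between continuous functions passes
from a set to its closure. So the estimate extends from `X̂` to `X` with the input still in `Û_c`,
and then from `Û_c` to `U_c` with an arbitrary state.
-/

section ContinuousDependence

variable {X U Y : Type*} [SeminormedAddCommGroup X] [SeminormedAddCommGroup U]
  [SeminormedAddCommGroup Y] {φ : ℝ → X → U → Y} {t : ℝ}

/-- Continuous dependence of a transition map on initial states and inputs, uniformly on compact
time intervals. The modulus `δ` may depend on the base point `(x, u)`. -/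
def ContinuousDependence (φ : ℝ → X → U → Y) : Prop :=
  ∀ (x : X) (u : U), ∀ T > (0 : ℝ), ∀ ε > (0 : ℝ), ∃ δ > (0 : ℝ),
    ∀ (x' : X) (u' : U), ‖x - x'‖ < δ → ‖u - u'‖ < δ →
      ∀ t ∈ Icc (0 : ℝ) T, ‖φ t x u - φ t x' u'‖ < ε

theorem ContinuousDependence.continuous_uncurry (hφ : ContinuousDependence φ) (ht : 0 ≤ t) :
    Continuous (Function.uncurry (φ t)) := by
  refine Metric.continuous_iff'.2 fun ⟨x, u⟩ ε hε => ?_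
  obtain ⟨δ, hδ, hclose⟩ := hφ x u (t + 1) (by linarith) ε hε
  filter_upwards [Metric.ball_mem_nhds (x, u) hδ] with ⟨x', u'⟩ hball
  obtain ⟨hx, hu⟩ : dist x' x < δ ∧ dist u' u < δ := max_lt_iff.1 hball
  rw [dist_comm, dist_eq_norm] at hx hu ⊢
  exact hclose x' u' hx hu t ⟨ht, by linarith⟩

end ContinuousDependence

theorem stmt8_general {X U Y : Type*} [SeminormedAddGroup X] [SeminormedAddGroup U]
    [SeminormedAddGroup Y] {φ : ℝ → X → U → Y} {Xhat : Set X} {Uhat : Set U}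
    (hφ_state : ∀ t ≥ (0 : ℝ), ∀ u ∈ Uhat, Continuous fun x => φ t x u)
    (hφ_input : ∀ t ≥ (0 : ℝ), ∀ x, Continuous (φ t x))
    (hXd : Dense Xhat) (hUd : Dense Uhat) {β : ℝ → ℝ → ℝ} {γ : ℝ → ℝ}
    (hβ : ∀ t ≥ (0 : ℝ), ContinuousOn (fun r => β r t) (Ici 0)) (hγ : ContinuousOn γ (Ici 0))
    (hISS : ∀ x ∈ Xhat, ∀ u ∈ Uhat, ∀ t ≥ (0 : ℝ), ‖φ t x u‖ ≤ β ‖x‖ t + γ ‖u‖) :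
    ∀ (x : X) (u : U), ∀ t ≥ (0 : ℝ), ‖φ t x u‖ ≤ β ‖x‖ t + γ ‖u‖ := by
  intro x u t ht
  have hβ_norm : Continuous fun x : X => β ‖x‖ t :=
    (hβ t ht).comp_continuous continuous_norm norm_nonneg
  have hγ_norm : Continuous fun u : U => γ ‖u‖ :=
    hγ.comp_continuous continuous_norm norm_nonneg
  have hISS_dense_input : ∀ u ∈ Uhat, ‖φ t x u‖ ≤ β ‖x‖ t + γ ‖u‖ := fun u hu =>
    le_on_closure (fun x hx => hISS x hx u hu t ht) (hφ_state t ht u hu).norm.continuousOn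
      (hβ_norm.add continuous_const).continuousOn (hXd x)
  exact le_on_closure hISS_dense_input (hφ_input t ht x).norm.continuousOn
    (continuous_const.add hγ_norm).continuousOn (hUd u)

/-- Density argument: if the transition map depends continuously on initial states and inputs,
uniformly on compact time intervals, and the ISS estimate holds on dense subsets `X̂`, `Û_c`,
then the same ISS estimate (with the same `β` and `γ`) holds on all of `X` and `U_c`. -/
theorem stmt8 {X Uc : Type*} [NormedAddCommGroup X] [NormedAddCommGroup Uc]
    (φ : ℝ → X → Uc → X)
    (hcont : ∀ (x : X) (u : Uc), ∀ T > (0:ℝ), ∀ ε > (0:ℝ), ∃ δ > (0:ℝ),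
        ∀ (x' : X) (u' : Uc), ‖x - x'‖ < δ → ‖u - u'‖ < δ →
          ∀ t ∈ Icc (0:ℝ) T, ‖φ t x u - φ t x' u'‖ < ε)
    (Xhat : Set X) (Uhat : Set Uc) (hXd : Dense Xhat) (hUd : Dense Uhat)
    (β : ℝ → ℝ → ℝ) (γ : ℝ → ℝ) (hβ : ClassKL β) (hγ : ClassK γ)
    (hISS : ∀ x ∈ Xhat, ∀ u ∈ Uhat, ∀ t ≥ (0:ℝ), ‖φ t x u‖ ≤ β ‖x‖ t + γ ‖u‖) :
    ∀ (x : X) (u : Uc), ∀ t ≥ (0:ℝ), ‖φ t x u‖ ≤ β ‖x‖ t + γ ‖u‖ := by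
  have hφ (t : ℝ) (ht : 0 ≤ t) := ContinuousDependence.continuous_uncurry hcont ht
  exact stmt8_general (fun t ht u _ => (hφ t ht).uncurry_right u)
    (fun t ht x => (hφ t ht).uncurry_left x) hXd hUd (fun t ht => (hβ.1 t ht).1) hγ.1 hISS
end

section
/- Let X and U be Banach spaces, let T(t), t ≥ 0, be a C0-semigroup on X satisfying ‖T(t)‖ ≤ K e^{−ht} for all t ≥ 0 with constants K ≥ 1 and h > 0, let C : U → X be a bounded linear operator, and let g : X × U → X satisfy: for every w > 0 there exists ρ > 0 such that ‖g(x,u)‖_X ≤ w(‖x‖_X + ‖u‖_U) whenever ‖x‖_X ≤ ρ and ‖u‖_U ≤ ρ. Then for every ε ∈ (0,h) there exist ρ* > 0 and constants M, G > 0 such that: for every x₀ ∈ X with ‖x₀‖_X ≤ ρ*, every continuous input u : [0,∞) → U with sup_{s≥0}‖u(s)‖_U ≤ ρ*, and every continuous function x : [0,∞) → X satisfying the variation-of-constants equation x(t) = T(t)x₀ + ∫₀^t T(t−s)(C u(s) + g(x(s),u(s))) ds for all t ≥ 0, one has the fading-memory estimate ‖x(t)‖_X ≤ M e^{−(h−ε)t}‖x₀‖_X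 + G · sup_{0≤s≤t} e^{−(h−ε)(t−s)} ‖u(s)‖_U for all t ≥ 0. In particular, the semilinear system ẋ = (A+B)x + Cu + g(x,u), whose linearization ẋ = (A+B)x + Cu is ISS, is locally input-to-state stable. -/
open Filter Set MeasureTheory intervalIntegral

/-!
Fix `α < h` and measure a solution on `[0, t]` by `Y = max e^{αs} ‖x s‖`. As long as `‖x‖ ≤ ρ`, the
forcing is at most `w ‖x s‖ + c ‖u s‖`, and convolving `e^{-hr}` with `e^{-αs}` costs a factor
`1 / (h - α)`; hence `Y ≤ K ‖x₀‖ + K (w Y + D) / (h - α)`, where `D` bounds `c e^{αs} ‖u s‖`. If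
`K w < h - α`, the term in `Y` is absorbed on the left, which is the fading-memory estimate. For
small data that estimate gives `‖x‖ < ρ` strictly, so `x` never reaches the sphere of radius `ρ`.
-/

section Bootstrap

variable {α β : Type*} [ConditionallyCompleteLinearOrder α] [TopologicalSpace α] [OrderTopology α]
  [DenselyOrdered α] [LinearOrder β] [TopologicalSpace β] [OrderClosedTopology β]

theorem forall_lt_of_continuousOn_of_forall_le_imp_lt {φ : α → β} {a b : α} {ρ : β}
    (hφ : ContinuousOn φ (Icc a b)) (ha : φ a ≤ ρ)
    (hstep : ∀ t ∈ Icc a b, (∀ s ∈ Icc a t, φ s ≤ ρ) → φ t < ρ) :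
    ∀ t ∈ Icc a b, φ t < ρ := by
  intro t ht
  by_contra! hexit
  have hcompact : IsCompact (Icc a b ∩ φ ⁻¹' Ici ρ) :=
    isCompact_Icc.of_isClosed_subset (hφ.preimage_isClosed_of_isClosed isClosed_Icc isClosed_Ici)
      inter_subset_left
  obtain ⟨τ, ⟨hτ, hτρ⟩, hfirst⟩ := hcompact.exists_isLeast ⟨t, ht, hexit⟩
  have hbefore : ∀ s ∈ Ico a τ, φ s ≤ ρ := fun s hs =>
    le_of_not_ge fun hs' => (hfirst ⟨⟨hs.1, hs.2.le.trans hτ.2⟩, hs'⟩).not_gt hs.2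
  have hupto : ∀ s ∈ Icc a τ, φ s ≤ ρ := by
    rcases hτ.1.eq_or_lt with haτ | haτ
    · rw [← haτ, Icc_self]
      exact forall_eq.2 ha
    · rw [← closure_Ico haτ.ne]
      refine le_on_closure hbefore ?_ continuousOn_const
      rw [closure_Ico haτ.ne]
      exact hφ.mono (Icc_subset_Icc_right hτ.2)
  exact (hstep τ hτ hupto).not_ge hτρ

end Bootstrap

theorem integral_exp_neg_mul_sub_le {δ : ℝ} (hδ : 0 < δ) (t : ℝ) :
    ∫ s in (0 : ℝ)..t, Real.exp (-δ * (t - s)) ≤ 1 / δ := by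
  have hprim : ∀ s ∈ uIcc 0 t,
      HasDerivAt (fun s => Real.exp (-δ * (t - s)) / δ) (Real.exp (-δ * (t - s))) s := by
    intro s _
    have hexp := (((hasDerivAt_id s).const_sub t).const_mul (-δ)).exp.div_const δ
    rwa [neg_mul_neg, mul_one, mul_div_cancel_right₀ _ hδ.ne'] at hexp
  rw [integral_eq_sub_of_hasDerivAt hprim (Continuous.intervalIntegrable (by fun_prop) _ _)]
  simp only [sub_self, mul_zero, Real.exp_zero]
  exact sub_le_self _ (by positivity)

section FadingMemory

variable {U : Type*} [SeminormedAddCommGroup U] {α r s t : ℝ} {u : ℝ → U}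

/-- The fading-memory supremum `sup_{0 ≤ s ≤ t} e^{-α(t-s)} ‖u s‖` of an input `u`, in which the
past is discounted at rate `α`. As a real `sSup` it is `0` when the weighted norms are unbounded. -/
noncomputable def fadingSup (α : ℝ) (u : ℝ → U) (t : ℝ) : ℝ :=
  sSup ((fun s => Real.exp (-α * (t - s)) * ‖u s‖) '' Icc 0 t)

theorem exp_mul_norm_le_of_norm_le (hα : 0 ≤ α) (hst : s ≤ t) (hu : ‖u s‖ ≤ r) :
    Real.exp (-α * (t - s)) * ‖u s‖ ≤ r := by
  have hexp : Real.exp (-α * (t - s)) ≤ 1 :=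
    Real.exp_le_one_iff.2 (mul_nonpos_of_nonpos_of_nonneg (neg_nonpos.2 hα) (sub_nonneg.2 hst))
  exact (mul_le_of_le_one_left (norm_nonneg _) hexp).trans hu

theorem fadingSup_le (hα : 0 ≤ α) (ht : 0 ≤ t) (hu : ∀ s ∈ Icc 0 t, ‖u s‖ ≤ r) :
    fadingSup α u t ≤ r :=
  csSup_le ((nonempty_Icc.2 ht).image _) <|
    forall_mem_image.2 fun s hs => exp_mul_norm_le_of_norm_le hα hs.2 (hu s hs)

theorem norm_le_exp_mul_fadingSup (hα : 0 ≤ α) (hu : ∀ s ∈ Icc 0 t, ‖u s‖ ≤ r)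
    (hs : s ∈ Icc 0 t) : ‖u s‖ ≤ Real.exp (α * (t - s)) * fadingSup α u t := by
  have hbdd : BddAbove ((fun s => Real.exp (-α * (t - s)) * ‖u s‖) '' Icc 0 t) :=
    ⟨r, forall_mem_image.2 fun s hs => exp_mul_norm_le_of_norm_le hα hs.2 (hu s hs)⟩
  have hle : Real.exp (-α * (t - s)) * ‖u s‖ ≤ fadingSup α u t :=
    le_csSup hbdd (mem_image_of_mem _ hs)
  rwa [neg_mul, Real.exp_neg, inv_mul_le_iff₀ (Real.exp_pos _)] at hle

theorem exp_add_fadingSup_le {M G y : ℝ} (hα : 0 ≤ α) (hM : 0 ≤ M) (hG : 0 ≤ G) (ht : 0 ≤ t)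
    (hy : 0 ≤ y) (hyr : y ≤ r) (hu : ∀ s ∈ Icc 0 t, ‖u s‖ ≤ r) :
    M * Real.exp (-α * t) * y + G * fadingSup α u t ≤ (M + G) * r := by
  have hexp : Real.exp (-α * t) ≤ 1 :=
    Real.exp_le_one_iff.2 (mul_nonpos_of_nonpos_of_nonneg (neg_nonpos.2 hα) ht)
  rw [add_mul]
  gcongr
  · exact mul_le_of_le_one_right hM hexp
  · exact fadingSup_le hα ht hu

end FadingMemory

section MildSolution

variable {X : Type*} [NormedAddCommGroup X] [NormedSpace ℝ X] {T : ℝ → X →L[ℝ] X}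
  {K h α D w : ℝ} {x₀ : X} {f x : ℝ → X} {t : ℝ}

/-- `x` is a continuous solution on `[0, b]` of the variation-of-constants equation with evolution
operators `T`, initial value `x₀` and forcing `f`. -/
structure IsMildSolutionOn (T : ℝ → X →L[ℝ] X) (x₀ : X) (f : ℝ → X) (b : ℝ) (x : ℝ → X) :
    Prop where
  continuousOn : ContinuousOn x (Icc 0 b)
  eq_add_integral : ∀ t ∈ Icc 0 b, x t = T t x₀ + ∫ s in (0 : ℝ)..t, T (t - s) (f s)

theorem IsMildSolutionOn.mono {b : ℝ} (hx : IsMildSolutionOn T x₀ f b x) (htb : t ≤ b) :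
    IsMildSolutionOn T x₀ f t x where
  continuousOn := hx.continuousOn.mono (Icc_subset_Icc_right htb)
  eq_add_integral s hs := hx.eq_add_integral s ⟨hs.1, hs.2.trans htb⟩

theorem IsMildSolutionOn.apply_zero {b : ℝ} (hx : IsMildSolutionOn T x₀ f b x) (hb : 0 ≤ b) :
    x 0 = T 0 x₀ := by
  simpa using hx.eq_add_integral 0 ⟨le_rfl, hb⟩

theorem nonneg_of_norm_le_mul_exp (hT : ∀ r ≥ 0, ‖T r‖ ≤ K * Real.exp (-h * r)) : 0 ≤ K := by
  simpa using (norm_nonneg _).trans (hT 0 le_rfl)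

theorem norm_integral_clm_apply_sub_le (hT : ∀ r ≥ 0, ‖T r‖ ≤ K * Real.exp (-h * r))
    (hαh : α < h) (ht : 0 ≤ t) (hf : ∀ s ∈ Icc 0 t, ‖f s‖ ≤ D * Real.exp (-α * s)) :
    ‖∫ s in (0 : ℝ)..t, T (t - s) (f s)‖ ≤ K * D / (h - α) * Real.exp (-α * t) := by
  have hK : 0 ≤ K := nonneg_of_norm_le_mul_exp hT
  have hD : 0 ≤ D := by simpa using (norm_nonneg _).trans (hf 0 ⟨le_rfl, ht⟩)
  have hpoint : ∀ s ∈ Ioc 0 t, ‖T (t - s) (f s)‖ ≤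
      K * D * Real.exp (-α * t) * Real.exp (-(h - α) * (t - s)) := fun s hs => calc
    ‖T (t - s) (f s)‖ ≤ K * Real.exp (-h * (t - s)) * (D * Real.exp (-α * s)) :=
      (T (t - s)).le_of_opNorm_le_of_le (hT _ (sub_nonneg.2 hs.2)) (hf s (Ioc_subset_Icc_self hs))
    _ = K * D * (Real.exp (-h * (t - s)) * Real.exp (-α * s)) := by ring
    _ = K * D * (Real.exp (-α * t) * Real.exp (-(h - α) * (t - s))) := by
      rw [← Real.exp_add, ← Real.exp_add]
      ring_nf
    _ = K * D * Real.exp (-α * t) * Real.exp (-(h - α) * (t - s)) := by ring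
  calc ‖∫ s in (0 : ℝ)..t, T (t - s) (f s)‖
      ≤ ∫ s in (0 : ℝ)..t, K * D * Real.exp (-α * t) * Real.exp (-(h - α) * (t - s)) :=
        norm_integral_le_of_norm_le ht (.of_forall hpoint)
          (Continuous.intervalIntegrable (by fun_prop) _ _)
    _ ≤ K * D * Real.exp (-α * t) * (1 / (h - α)) := by
        rw [intervalIntegral.integral_const_mul]
        gcongr
        exact integral_exp_neg_mul_sub_le (sub_pos.2 hαh) t
    _ = K * D / (h - α) * Real.exp (-α * t) := by ring

theorem IsMildSolutionOn.norm_le_of_norm_forcing_le (hx : IsMildSolutionOn T x₀ f t x)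
    (hT : ∀ r ≥ 0, ‖T r‖ ≤ K * Real.exp (-h * r)) (hαh : α < h) (ht : 0 ≤ t)
    (hf : ∀ s ∈ Icc 0 t, ‖f s‖ ≤ D * Real.exp (-α * s)) :
    ‖x t‖ ≤ (K * ‖x₀‖ + K * D / (h - α)) * Real.exp (-α * t) := by
  have hK : 0 ≤ K := nonneg_of_norm_le_mul_exp hT
  have hfree : ‖T t x₀‖ ≤ K * Real.exp (-α * t) * ‖x₀‖ :=
    (T t).le_of_opNorm_le ((hT t ht).trans (by gcongr)) x₀
  rw [hx.eq_add_integral t ⟨ht, le_rfl⟩]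
  linarith [norm_add_le (T t x₀) (∫ s in (0 : ℝ)..t, T (t - s) (f s)),
    norm_integral_clm_apply_sub_le hT hαh ht hf]

theorem IsMildSolutionOn.norm_le_of_norm_forcing_le_mul_norm_add
    (hx : IsMildSolutionOn T x₀ f t x) (hT : ∀ r ≥ 0, ‖T r‖ ≤ K * Real.exp (-h * r))
    (hw : 0 ≤ w) (hKw : K * w < h - α) (ht : 0 ≤ t)
    (hf : ∀ s ∈ Icc 0 t, ‖f s‖ ≤ w * ‖x s‖ + D * Real.exp (-α * s)) :
    ‖x t‖ ≤ (K * (h - α) * ‖x₀‖ + K * D) / (h - α - K * w) * Real.exp (-α * t) := by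
  have hαh : α < h :=
    sub_pos.1 ((mul_nonneg (nonneg_of_norm_le_mul_exp hT) hw).trans_lt hKw)
  have hcont : ContinuousOn (fun s => ‖x s‖ * Real.exp (α * s)) (Icc 0 t) :=
    hx.continuousOn.norm.mul (by fun_prop)
  obtain ⟨τ, hτ, hmax⟩ := isCompact_Icc.exists_isMaxOn (nonempty_Icc.2 ht) hcont
  set Y := ‖x τ‖ * Real.exp (α * τ) with hY
  have hxY : ∀ s ∈ Icc 0 t, ‖x s‖ ≤ Y * Real.exp (-α * s) := fun s hs => by
    rw [neg_mul, Real.exp_neg, le_mul_inv_iff₀ (Real.exp_pos _)]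
    exact hmax hs
  have hforcing : ∀ s ∈ Icc 0 τ, ‖f s‖ ≤ (w * Y + D) * Real.exp (-α * s) := fun s hs => by
    have hst : s ∈ Icc 0 t := ⟨hs.1, hs.2.trans hτ.2⟩
    linarith [hf s hst, mul_le_mul_of_nonneg_left (hxY s hst) hw]
  have hYself : Y ≤ K * ‖x₀‖ + K * (w * Y + D) / (h - α) := by
    rw [hY, ← le_div_iff₀ (Real.exp_pos _), div_eq_mul_inv, ← Real.exp_neg, ← neg_mul]
    exact (hx.mono hτ.2).norm_le_of_norm_forcing_le hT hαh hτ.1 hforcing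
  have hYbound : Y ≤ (K * (h - α) * ‖x₀‖ + K * D) / (h - α - K * w) := by
    rw [le_div_iff₀ (sub_pos.2 hKw)]
    rw [← sub_le_iff_le_add', le_div_iff₀ (sub_pos.2 hαh)] at hYself
    linarith
  exact (hxY t ⟨ht, le_rfl⟩).trans (by gcongr)

theorem IsMildSolutionOn.norm_le_exp_add_fadingSup {U : Type*} [SeminormedAddCommGroup U]
    {u : ℝ → U} {c r : ℝ} (hx : IsMildSolutionOn T x₀ f t x)
    (hT : ∀ r ≥ 0, ‖T r‖ ≤ K * Real.exp (-h * r)) (hα : 0 ≤ α) (hw : 0 ≤ w) (hc : 0 ≤ c)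
    (hKw : K * w < h - α) (ht : 0 ≤ t) (hu : ∀ s ∈ Icc 0 t, ‖u s‖ ≤ r)
    (hf : ∀ s ∈ Icc 0 t, ‖f s‖ ≤ w * ‖x s‖ + c * ‖u s‖) :
    ‖x t‖ ≤ K * (h - α) / (h - α - K * w) * Real.exp (-α * t) * ‖x₀‖ +
      K * c / (h - α - K * w) * fadingSup α u t := by
  have hforcing : ∀ s ∈ Icc 0 t, ‖f s‖ ≤
      w * ‖x s‖ + c * (Real.exp (α * t) * fadingSup α u t) * Real.exp (-α * s) := fun s hs => calc
    ‖f s‖ ≤ w * ‖x s‖ + c * ‖u s‖ := hf s hs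
    _ ≤ w * ‖x s‖ + c * (Real.exp (α * (t - s)) * fadingSup α u t) := by
      gcongr
      exact norm_le_exp_mul_fadingSup hα hu hs
    _ = w * ‖x s‖ + c * (Real.exp (α * t) * fadingSup α u t) * Real.exp (-α * s) := by
      rw [show α * (t - s) = α * t + -α * s by ring, Real.exp_add]
      ring
  refine (hx.norm_le_of_norm_forcing_le_mul_norm_add hT hw hKw ht hforcing).trans_eq ?_
  have hcancel : Real.exp (α * t) * Real.exp (-α * t) = 1 := by
    rw [neg_mul, ← Real.exp_add, add_neg_cancel, Real.exp_zero]
  linear_combination K * c / (h - α - K * w) * fadingSup α u t * hcancel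

end MildSolution

theorem norm_clm_apply_add_le {X U : Type*} [SeminormedAddCommGroup X] [NormedSpace ℝ X]
    [SeminormedAddCommGroup U] [NormedSpace ℝ U] (C : U →L[ℝ] X) {w : ℝ} {x y : X} {u : U}
    (hy : ‖y‖ ≤ w * (‖x‖ + ‖u‖)) : ‖C u + y‖ ≤ w * ‖x‖ + (‖C‖ + w) * ‖u‖ := by
  linarith [norm_add_le (C u) y, C.le_opNorm u]

theorem stmt9_general {X U : Type*} [NormedAddCommGroup X] [NormedSpace ℝ X] [CompleteSpace X]
    [SeminormedAddCommGroup U] (T : ℝ → X →L[ℝ] X) {K h α w c ρ : ℝ} (hK : 0 < K)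
    (hT : ∀ t ≥ 0, ‖T t‖ ≤ K * Real.exp (-h * t)) (hα : 0 ≤ α) (hw : 0 ≤ w) (hc : 0 < c)
    (hKw : K * w < h - α) (hρ : 0 < ρ) {f : X → U → X}
    (hf : ∀ x u, ‖x‖ ≤ ρ → ‖u‖ ≤ ρ → ‖f x u‖ ≤ w * ‖x‖ + c * ‖u‖) :
    ∃ ρs > 0, ∃ M > 0, ∃ G > 0, ∀ x₀ : X, ‖x₀‖ ≤ ρs → ∀ t ≥ 0,
      ∀ u : ℝ → U, (∀ s ∈ Icc 0 t, ‖u s‖ ≤ ρs) →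
        ∀ x : ℝ → X, IsMildSolutionOn T x₀ (fun s => f (x s) (u s)) t x →
          ‖x t‖ ≤ M * Real.exp (-α * t) * ‖x₀‖ + G * fadingSup α u t := by
  have hgap : 0 < h - α - K * w := sub_pos.2 hKw
  have hαh : 0 < h - α := (mul_nonneg hK.le hw).trans_lt hKw
  set M := K * (h - α) / (h - α - K * w)
  set G := K * c / (h - α - K * w)
  have hMpos : 0 < M := div_pos (mul_pos hK hαh) hgap
  have hGpos : 0 < G := div_pos (mul_pos hK hc) hgap
  obtain ⟨ρs, hρs, hρsmall⟩ : ∃ ρs > 0, ρs * (K + M + G + 1) = ρ :=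
    ⟨ρ / (K + M + G + 1), by positivity, by field_simp⟩
  have hKρ : K * ρs ≤ ρ := by nlinarith only [hρs, hρsmall, hMpos, hGpos]
  have hMGρ : (M + G) * ρs < ρ := by nlinarith only [hρs, hρsmall, hK]
  have hρsρ : ρs ≤ ρ := by nlinarith only [hρs, hρsmall, hK, hMpos, hGpos]
  refine ⟨ρs, hρs, M, hMpos, G, hGpos, fun x₀ hx₀ t ht u hu x hx => ?_⟩
  have hu_mono : ∀ τ ∈ Icc 0 t, ∀ s ∈ Icc 0 τ, ‖u s‖ ≤ ρs := fun τ hτ s hs =>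
    hu s ⟨hs.1, hs.2.trans hτ.2⟩
  have hest : ∀ τ ∈ Icc 0 t, (∀ s ∈ Icc 0 τ, ‖x s‖ ≤ ρ) →
      ‖x τ‖ ≤ M * Real.exp (-α * τ) * ‖x₀‖ + G * fadingSup α u τ := fun τ hτ hxρ =>
    (hx.mono hτ.2).norm_le_exp_add_fadingSup hT hα hw hc.le hKw hτ.1 (hu_mono τ hτ)
      fun s hs => hf _ _ (hxρ s hs) ((hu_mono τ hτ s hs).trans hρsρ)
  have hx0 : ‖x 0‖ ≤ ρ := by
    have hT0 : ‖T 0‖ ≤ K := by simpa using hT 0 le_rfl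
    rw [hx.apply_zero ht]
    exact ((T 0).le_of_opNorm_le_of_le hT0 hx₀).trans hKρ
  have hinside : ∀ τ ∈ Icc 0 t, ‖x τ‖ < ρ :=
    forall_lt_of_continuousOn_of_forall_le_imp_lt hx.continuousOn.norm hx0 fun τ hτ hxρ =>
      ((hest τ hτ hxρ).trans (exp_add_fadingSup_le hα hMpos.le hGpos.le hτ.1 (norm_nonneg _)
        hx₀ (hu_mono τ hτ))).trans_lt hMGρ
  exact hest t ⟨ht, le_rfl⟩ fun s hs => (hinside s hs).le

/-- Fading-memory estimate / linearization principle: if the `C₀`-semigroup `T` generated by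
the linearization satisfies `‖T(t)‖ ≤ K e^{-ht}` and the nonlinearity `g` is of higher order
near the origin, then for every `ε ∈ (0,h)` solutions of the variation-of-constants equation
with small initial data and small inputs satisfy
`‖x(t)‖ ≤ M e^{-(h-ε)t}‖x₀‖ + G sup_{0≤s≤t} e^{-(h-ε)(t-s)} ‖u(s)‖`;
in particular the semilinear system is locally input-to-state stable. -/
theorem stmt9 {X U : Type*} [NormedAddCommGroup X] [NormedSpace ℝ X] [CompleteSpace X]
    [NormedAddCommGroup U] [NormedSpace ℝ U]
    (T : ℝ → X →L[ℝ] X)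
    (hT0 : T 0 = ContinuousLinearMap.id ℝ X)
    (hTsem : ∀ t ≥ (0:ℝ), ∀ s ≥ (0:ℝ), T (t + s) = (T t).comp (T s))
    (hTcont : ∀ x : X, ContinuousOn (fun t => T t x) (Ici 0))
    (K h : ℝ) (hK : 1 ≤ K) (hh : 0 < h)
    (hTb : ∀ t ≥ (0:ℝ), ‖T t‖ ≤ K * Real.exp (-h * t))
    (C : U →L[ℝ] X)
    (g : X → U → X)
    (hg : ∀ w > (0:ℝ), ∃ ρ > (0:ℝ), ∀ (x : X) (u : U), ‖x‖ ≤ ρ → ‖u‖ ≤ ρ →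
        ‖g x u‖ ≤ w * (‖x‖ + ‖u‖)) :
    ∀ ε : ℝ, 0 < ε → ε < h →
      ∃ ρs > (0:ℝ), ∃ M > (0:ℝ), ∃ G > (0:ℝ),
        ∀ x₀ : X, ‖x₀‖ ≤ ρs →
          ∀ u : ℝ → U, ContinuousOn u (Ici 0) → (∀ s ≥ (0:ℝ), ‖u s‖ ≤ ρs) →
            ∀ x : ℝ → X, ContinuousOn x (Ici 0) →
              (∀ t ≥ (0:ℝ),
                x t = T t x₀ + ∫ s in (0:ℝ)..t, T (t - s) (C (u s) + g (x s) (u s))) →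
              ∀ t ≥ (0:ℝ),
                ‖x t‖ ≤ M * Real.exp (-(h - ε) * t) * ‖x₀‖ +
                  G * sSup ((fun s => Real.exp (-(h - ε) * (t - s)) * ‖u s‖) '' Icc 0 t) := by
  intro ε hε hεh
  obtain ⟨ρ, hρ, hgρ⟩ := hg (ε / (2 * K)) (by positivity)
  obtain ⟨ρs, hρs, M, hM, G, hG, hest⟩ := stmt9_general T (by positivity) hTb (sub_nonneg.2 hεh.le)
    (by positivity) (by positivity) (by field_simp; linarith) hρ
    fun x u hx hu => norm_clm_apply_add_le C (hgρ x u hx hu)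
  exact ⟨ρs, hρs, M, hM, G, hG, fun x₀ hx₀ u _ hu x hx hxe t ht => hest x₀ hx₀ t ht u
    (fun s hs => hu s hs.1) x ⟨hx.mono Icc_subset_Ici_self, fun s hs => hxe s hs.1⟩⟩
end

section
/- Let X be a real Hilbert space and U a normed linear space. Let D ⊆ X be a linear subspace, R : D → X a linear map, let P : X → X be a bounded self-adjoint linear operator which is coercive, i.e. there is ε > 0 with ⟨Px, x⟩ ≥ ε‖x‖²_X for all x ∈ X, and which satisfies the Lyapunov identity ⟨Rx, Px⟩ + ⟨Px, Rx⟩ = −‖x‖²_X for all x ∈ D. Let C : U → X be a bounded linear operator and let g : X × U → X satisfy: for every w > 0 there exists ρ > 0 such that ‖g(x,u)‖_X ≤ w(‖x‖_X + ‖u‖_U) whenever ‖x‖_X ≤ ρ and ‖u‖_U ≤ ρ. Define V(x) = ⟨Px, x⟩. Then: (i) ε‖x‖²_X ≤ V(x) ≤ ‖P‖·‖x‖²_X for all x ∈ X; and (ii) there exist ρ > 0 and c > 0 such that for every x ∈ D with ‖x‖_X ≤ ρ and every u ∈ U with ‖u‖_U ≤ ‖x‖²_X (i.e. ‖x‖_X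 ≥ χ(‖u‖_U) for the gain χ(r) = √r), one has 2⟨Px, Rx + Cu + g(x,u)⟩ ≤ −c‖x‖²_X. Hence V is a local ISS-Lyapunov function for the system ẋ = Rx + Cu + g(x,u), with gain χ(r) = √r. -/
open Set RealInnerProductSpace

/-!
Along the inputs with `‖u‖ ≤ ‖x‖²`, or more generally `‖u‖ ≤ κ ‖x‖` with `κ r = o(r)`, the
perturbation `C u + g x u` is `o(‖x‖)` as `x → 0`. By Cauchy–Schwarz it changes the derivative
`2⟪P x, R x⟫ = -‖x‖²` of the Lyapunov function along the linear flow by only `o(‖x‖²)`, so every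
decay rate `c < 1` survives near the origin.
-/

open Filter Topology Asymptotics

section GainFilter

variable {X U : Type*} [SeminormedAddCommGroup X] [SeminormedAddCommGroup U] {κ : ℝ → ℝ}

/-- The filter of state–input pairs `(x, u)` with `x → 0` that satisfy the gain condition
`‖u‖ ≤ κ ‖x‖`. The bound `κ` plays the role of the inverse of the gain `χ`, so that `χ = √` is
encoded by `κ r = r ^ 2`. -/
def gainFilter (X U : Type*) [SeminormedAddCommGroup X] [SeminormedAddCommGroup U]
    (κ : ℝ → ℝ) : Filter (X × U) :=
  comap Prod.fst (𝓝 0) ⊓ 𝓟 {p | ‖p.2‖ ≤ κ ‖p.1‖}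

theorem eventually_gainFilter_iff {q : X × U → Prop} :
    (∀ᶠ p in gainFilter X U κ, q p) ↔
      ∃ ρ > 0, ∀ x u, ‖x‖ ≤ ρ → ‖u‖ ≤ κ ‖x‖ → q (x, u) := by
  have hbasis := (Metric.nhds_basis_closedBall (x := (0 : X))).comap (Prod.fst : X × U → X)
  rw [gainFilter, eventually_inf_principal, hbasis.eventually_iff]
  simp only [mem_preimage, mem_closedBall_zero_iff, mem_ofPred_eq, Prod.forall]

theorem tendsto_fst_gainFilter : Tendsto Prod.fst (gainFilter X U κ) (𝓝 0) :=
  tendsto_comap.mono_left inf_le_left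

theorem isLittleO_snd_fst_gainFilter (hκ : κ =o[𝓝[≥] 0] id) :
    (Prod.snd : X × U → U) =o[gainFilter X U κ] (Prod.fst : X × U → X) := by
  have hnorm : Tendsto (fun p : X × U ↦ ‖p.1‖) (gainFilter X U κ) (𝓝[≥] 0) :=
    tendsto_nhdsWithin_iff.2 ⟨tendsto_zero_iff_norm_tendsto_zero.1 tendsto_fst_gainFilter,
      .of_forall fun p ↦ norm_nonneg p.1⟩
  have hgain : ∀ᶠ p in gainFilter X U κ, ‖p.2‖ ≤ κ ‖p.1‖ := mem_inf_of_right fun _ hp ↦ hp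
  exact (IsBigO.of_norm_eventuallyLE hgain).trans_isLittleO (hκ.comp_tendsto hnorm).of_norm_right

theorem gainFilter_le_nhds_zero (hκ : κ =o[𝓝[≥] 0] id) : gainFilter X U κ ≤ 𝓝 0 :=
  have hsnd : Tendsto (fun p : X × U ↦ ‖p.2‖) (gainFilter X U κ) (𝓝 0) :=
    (isLittleO_snd_fst_gainFilter hκ).isBigO.norm_norm.trans_tendsto
      (tendsto_zero_iff_norm_tendsto_zero.1 tendsto_fst_gainFilter)
  tendsto_fst_gainFilter.prodMk_nhds (tendsto_zero_iff_norm_tendsto_zero.2 hsnd)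

end GainFilter

theorem isLittleO_nhds_zero_of_forall_norm_add {X U Y : Type*} [SeminormedAddCommGroup X]
    [SeminormedAddCommGroup U] [Norm Y] {g : X → U → Y}
    (hg : ∀ w > (0 : ℝ), ∃ ρ > (0 : ℝ), ∀ x u, ‖x‖ ≤ ρ → ‖u‖ ≤ ρ →
      ‖g x u‖ ≤ w * (‖x‖ + ‖u‖)) :
    (fun p : X × U ↦ g p.1 p.2) =o[𝓝 0] fun p ↦ ‖p.1‖ + ‖p.2‖ := by
  refine isLittleO_iff.2 fun w hw ↦ ?_
  obtain ⟨ρ, hρ, hgρ⟩ := hg w hw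
  filter_upwards [Metric.closedBall_mem_nhds (0 : X × U) hρ] with p hp
  obtain ⟨hx, hu⟩ := norm_prod_le_iff.1 (mem_closedBall_zero_iff.1 hp)
  exact (hgρ p.1 p.2 hx hu).trans (by gcongr; exact Real.le_norm_self _)

theorem isLittleO_perturbation_gainFilter {X U Y : Type*} [SeminormedAddCommGroup X]
    [SeminormedAddCommGroup U] [NormedSpace ℝ U] [SeminormedAddCommGroup Y] [NormedSpace ℝ Y]
    {κ : ℝ → ℝ} (hκ : κ =o[𝓝[≥] 0] id) (C : U →L[ℝ] Y) {g : X → U → Y}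
    (hg : (fun p : X × U ↦ g p.1 p.2) =o[𝓝 0] fun p ↦ ‖p.1‖ + ‖p.2‖) :
    (fun p : X × U ↦ C p.2 + g p.1 p.2) =o[gainFilter X U κ] (Prod.fst : X × U → X) := by
  have hu := isLittleO_snd_fst_gainFilter (X := X) (U := U) hκ
  have hsum : (fun p : X × U ↦ ‖p.1‖ + ‖p.2‖) =O[gainFilter X U κ] (Prod.fst : X × U → X) :=
    (isBigO_refl _ _).norm_left.add hu.isBigO.norm_left
  exact ((C.isBigO_comp _ _).trans_isLittleO hu).add
    ((hg.mono (gainFilter_le_nhds_zero hκ)).trans_isBigO hsum)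

section InnerApply

variable {X Y : Type*} [SeminormedAddCommGroup X] [NormedSpace ℝ X]
  [SeminormedAddCommGroup Y] [InnerProductSpace ℝ Y]

theorem real_inner_clm_apply_le (P : X →L[ℝ] Y) (x : X) (z : Y) : ⟪P x, z⟫ ≤ ‖P‖ * ‖x‖ * ‖z‖ :=
  (real_inner_le_norm _ _).trans (by gcongr; exact P.le_opNorm x)

theorem two_mul_real_inner_clm_apply_add_le (P : X →L[ℝ] Y) {x : X} {y z : Y} {δ : ℝ}
    (hy : 2 * ⟪P x, y⟫ ≤ -‖x‖ ^ 2) (hz : ‖z‖ ≤ δ * ‖x‖) :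
    2 * ⟪P x, y + z⟫ ≤ -(1 - 2 * ‖P‖ * δ) * ‖x‖ ^ 2 :=
  calc 2 * ⟪P x, y + z⟫ = 2 * ⟪P x, y⟫ + 2 * ⟪P x, z⟫ := by rw [inner_add_right, mul_add]
    _ ≤ -‖x‖ ^ 2 + 2 * (‖P‖ * ‖x‖ * (δ * ‖x‖)) := by
      gcongr
      exact (real_inner_clm_apply_le P x z).trans (by gcongr)
    _ = -(1 - 2 * ‖P‖ * δ) * ‖x‖ ^ 2 := by ring

end InnerApply

theorem stmt10_general {X U : Type*} [SeminormedAddCommGroup X] [InnerProductSpace ℝ X]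
    [SeminormedAddCommGroup U] [NormedSpace ℝ U] {D : Set X} {R : D → X} (P : X →L[ℝ] X)
    (hLyap : ∀ x : D, ⟪R x, P (x : X)⟫ + ⟪P (x : X), R x⟫ ≤ -‖(x : X)‖ ^ 2)
    (C : U →L[ℝ] X) {g : X → U → X}
    (hg : ∀ w > (0 : ℝ), ∃ ρ > (0 : ℝ), ∀ (x : X) (u : U), ‖x‖ ≤ ρ → ‖u‖ ≤ ρ →
      ‖g x u‖ ≤ w * (‖x‖ + ‖u‖))
    {κ : ℝ → ℝ} (hκ : κ =o[𝓝[≥] 0] id) :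
    (∀ x : X, ⟪P x, x⟫ ≤ ‖P‖ * ‖x‖ ^ 2) ∧
    ∀ c < (1 : ℝ), ∃ ρ > (0 : ℝ), ∀ x : D, ‖(x : X)‖ ≤ ρ → ∀ u : U, ‖u‖ ≤ κ ‖(x : X)‖ →
      2 * ⟪P (x : X), R x + C u + g (x : X) u⟫ ≤ -c * ‖(x : X)‖ ^ 2 := by
  refine ⟨fun x ↦ (real_inner_clm_apply_le P x x).trans_eq (by ring), fun c hc ↦ ?_⟩
  obtain ⟨δ, hδ, hPδ⟩ : ∃ δ > 0, 2 * ‖P‖ * δ < 1 - c :=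
    exists_pos_mul_lt (sub_pos.2 hc) (2 * ‖P‖)
  have hpert := isLittleO_perturbation_gainFilter hκ C (isLittleO_nhds_zero_of_forall_norm_add hg)
  obtain ⟨ρ, hρ, hsmall⟩ := eventually_gainFilter_iff.1 (hpert.def hδ)
  refine ⟨ρ, hρ, fun x hx u hu ↦ ?_⟩
  have hlin : 2 * ⟪P (x : X), R x⟫ ≤ -‖(x : X)‖ ^ 2 := by
    simpa only [real_inner_comm, two_mul] using hLyap x
  calc 2 * ⟪P (x : X), R x + C u + g x u⟫
      = 2 * ⟪P (x : X), R x + (C u + g x u)⟫ := by rw [add_assoc]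
    _ ≤ -(1 - 2 * ‖P‖ * δ) * ‖(x : X)‖ ^ 2 :=
      two_mul_real_inner_clm_apply_add_le P hlin (hsmall x u hx hu)
    _ ≤ -c * ‖(x : X)‖ ^ 2 := by gcongr; linarith

/-- On a real Hilbert space, if the bounded self-adjoint coercive operator `P` satisfies the
Lyapunov identity `⟨Rx,Px⟩ + ⟨Px,Rx⟩ = -‖x‖²` on the domain `D` of `R`, then
`V(x) = ⟨Px,x⟩` is a local ISS-Lyapunov function for `ẋ = Rx + Cu + g(x,u)` with gain
`χ(r) = √r`: (i) `ε‖x‖² ≤ V(x) ≤ ‖P‖‖x‖²`, and (ii) there exist `ρ, c > 0` such that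
`‖x‖ ≤ ρ` and `‖u‖ ≤ ‖x‖²` imply `2⟨Px, Rx + Cu + g(x,u)⟩ ≤ -c‖x‖²`. -/
theorem stmt10 {X U : Type*} [NormedAddCommGroup X] [InnerProductSpace ℝ X] [CompleteSpace X]
    [NormedAddCommGroup U] [NormedSpace ℝ U]
    (D : Submodule ℝ X) (R : D →ₗ[ℝ] X)
    (P : X →L[ℝ] X)
    (hPsa : ∀ x y : X, ⟪P x, y⟫ = ⟪x, P y⟫)
    (ε : ℝ) (hε : 0 < ε)
    (hPcoer : ∀ x : X, ε * ‖x‖ ^ 2 ≤ ⟪P x, x⟫)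
    (hLyap : ∀ x : D, ⟪R x, P (x : X)⟫ + ⟪P (x : X), R x⟫ = -‖(x : X)‖ ^ 2)
    (C : U →L[ℝ] X)
    (g : X → U → X)
    (hg : ∀ w > (0:ℝ), ∃ ρ > (0:ℝ), ∀ (x : X) (u : U), ‖x‖ ≤ ρ → ‖u‖ ≤ ρ →
        ‖g x u‖ ≤ w * (‖x‖ + ‖u‖)) :
    (∀ x : X, ε * ‖x‖ ^ 2 ≤ ⟪P x, x⟫ ∧ ⟪P x, x⟫ ≤ ‖P‖ * ‖x‖ ^ 2) ∧
    (∃ ρ > (0:ℝ), ∃ c > (0:ℝ), ∀ x : D, ‖(x : X)‖ ≤ ρ →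
        ∀ u : U, ‖u‖ ≤ ‖(x : X)‖ ^ 2 →
          2 * ⟪P (x : X), R x + C u + g (x : X) u⟫ ≤ -c * ‖(x : X)‖ ^ 2) := by
  obtain ⟨hupper, hdecay⟩ := stmt10_general (D := D) P (fun x ↦ (hLyap x).le) C hg
    ((isLittleO_pow_id one_lt_two).mono inf_le_left)
  obtain ⟨ρ, hρ, hdecay_half⟩ := hdecay (1 / 2) one_half_lt_one
  exact ⟨fun x ↦ ⟨hPcoer x, hupper x⟩, ρ, hρ, 1 / 2, one_half_pos, hdecay_half⟩
end

section
/- Let s : [0,π] → ℝ be twice continuously differentiable with s(0) = s(π) = 0, and let f : ℝ → ℝ be continuously differentiable with f(0) = 0 and f′(y) ≥ 0 for all y ∈ ℝ. Then ∫₀^π ( s″(x) − f(s(x)) )² dx ≥ ∫₀^π ( s′(x) )² dx. -/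
open Set MeasureTheory intervalIntegral

/-!
Expanding the square, `∫ (s'' - f(s))² = ∫ (s'')² - 2 ∫ s'' f(s) + ∫ f(s)²`. The middle integral is
at most `0`, because `(s' f(s))' = s'' f(s) + f'(s) (s')² ≥ s'' f(s)` and `f(s)` vanishes at both
endpoints. It remains to bound `∫ (s'')²` below by `κ ∫ (s')²` with `κ = (π / (b - a))²`. Since
`∫ (s')² = -∫ s s''`, expanding `0 ≤ ∫ (s'' + κ s)²` reduces this to Wirtinger's inequality
`κ ∫ s² ≤ ∫ (s')²`.

Wirtinger's inequality comes from a Riccati equation: if `w' = c + w²`, then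
`(u')² - c u² = (u' + w u)² - (w u²)'`. For `c = l²` the solution `w = l tan (l (x - (a + b) / 2))`
is regular on `[a, b]` as long as `l (b - a) < π`, and the sharp constant is the limit
`l → π / (b - a)`.
-/

section SquareIntegrable

variable {a b : ℝ} {g h : ℝ → ℝ}

theorem memLp_two_Icc_of_continuousOn (hg : ContinuousOn g (Icc a b)) :
    MemLp g 2 (volume.restrict (Icc a b)) :=
  (memLp_two_iff_integrable_sq (hg.aestronglyMeasurable measurableSet_Icc)).2
    (hg.pow 2).integrableOn_Icc

theorem integral_sub_sq (hab : a ≤ b) (hg : MemLp g 2 (volume.restrict (Icc a b)))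
    (hh : MemLp h 2 (volume.restrict (Icc a b))) :
    ∫ x in a..b, (g x - h x) ^ 2 =
      (∫ x in a..b, g x ^ 2) - 2 * (∫ x in a..b, g x * h x) + ∫ x in a..b, h x ^ 2 := by
  have hg_sq : IntervalIntegrable (fun x ↦ g x ^ 2) volume a b :=
    (intervalIntegrable_iff_integrableOn_Icc_of_le hab).2 hg.integrable_sq
  have hh_sq : IntervalIntegrable (fun x ↦ h x ^ 2) volume a b :=
    (intervalIntegrable_iff_integrableOn_Icc_of_le hab).2 hh.integrable_sq
  have hcross : IntervalIntegrable (fun x ↦ 2 * (g x * h x)) volume a b :=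
    ((intervalIntegrable_iff_integrableOn_Icc_of_le hab).2 (hg.integrable_mul hh)).const_mul 2
  simp only [sub_sq, mul_assoc]
  rw [intervalIntegral.integral_add (hg_sq.sub hcross) hh_sq,
    intervalIntegral.integral_sub hg_sq hcross, intervalIntegral.integral_const_mul]

theorem integral_sq_le_integral_sub_sq (hab : a ≤ b)
    (hg : MemLp g 2 (volume.restrict (Icc a b))) (hh : MemLp h 2 (volume.restrict (Icc a b)))
    (hgh : ∫ x in a..b, g x * h x ≤ 0) :
    ∫ x in a..b, g x ^ 2 ≤ ∫ x in a..b, (g x - h x) ^ 2 := by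
  have hnonneg : 0 ≤ ∫ x in a..b, h x ^ 2 :=
    intervalIntegral.integral_nonneg hab fun _ _ ↦ sq_nonneg _
  linarith [integral_sub_sq hab hg hh]

end SquareIntegrable

section Wirtinger

variable {a b : ℝ} {u u' : ℝ → ℝ}

theorem mul_integral_sq_le_integral_deriv_sq_of_riccati {c : ℝ} {w w' : ℝ → ℝ} (hab : a ≤ b)
    (hu : ContinuousOn u (Icc a b)) (huu' : ∀ x ∈ Ioo a b, HasDerivAt u (u' x) x)
    (hu' : IntervalIntegrable (fun x ↦ u' x ^ 2) volume a b) (hua : u a = 0) (hub : u b = 0)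
    (hw : ContinuousOn w (Icc a b)) (hww' : ∀ x ∈ Ioo a b, HasDerivAt w (w' x) x)
    (hriccati : ∀ x ∈ Ioo a b, c + w x ^ 2 ≤ w' x) :
    c * ∫ x in a..b, u x ^ 2 ≤ ∫ x in a..b, u' x ^ 2 := by
  have hu2 : IntervalIntegrable (fun x ↦ c * u x ^ 2) volume a b :=
    ((hu.pow 2).intervalIntegrable_of_Icc hab).const_mul c
  have hderiv : ∀ x ∈ Ioo a b, HasDerivAt (fun x ↦ -(w x * u x ^ 2))
      (-(w' x * u x ^ 2 + w x * (2 * u x * u' x))) x := fun x hx ↦ by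
    convert! ((hww' x hx).mul ((huu' x hx).pow 2)).neg using 1
    simp
  have hle : ∀ x ∈ Ioo a b,
      -(w' x * u x ^ 2 + w x * (2 * u x * u' x)) ≤ u' x ^ 2 - c * u x ^ 2 := fun x hx ↦ by
    linarith [mul_le_mul_of_nonneg_right (hriccati x hx) (sq_nonneg (u x)),
      sq_nonneg (u' x + w x * u x)]
  have hint := sub_le_integral_of_hasDeriv_right_of_le hab (hw.mul (hu.pow 2)).neg
    (fun x hx ↦ (hderiv x hx).hasDerivWithinAt)
    ((intervalIntegrable_iff_integrableOn_Icc_of_le hab).1 (hu'.sub hu2)) hle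
  rw [intervalIntegral.integral_sub hu' hu2, intervalIntegral.integral_const_mul] at hint
  simpa [hua, hub] using hint

theorem hasDerivAt_mul_tan_mul_sub {l m x : ℝ} (hx : Real.cos (l * (x - m)) ≠ 0) :
    HasDerivAt (fun x ↦ l * Real.tan (l * (x - m)))
      (l ^ 2 + (l * Real.tan (l * (x - m))) ^ 2) x := by
  have hlin : HasDerivAt (fun x ↦ l * (x - m)) l x := by
    simpa using ((hasDerivAt_id x).sub_const m).const_mul l
  convert! ((Real.hasDerivAt_tan hx).comp x hlin).const_mul l using 1
  rw [one_div, ← Real.inv_one_add_tan_sq hx, inv_inv]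
  ring

theorem cos_mul_sub_midpoint_pos {l x : ℝ} (hl : 0 ≤ l) (hlab : l * (b - a) < Real.pi)
    (hx : x ∈ Icc a b) : 0 < Real.cos (l * (x - (a + b) / 2)) := by
  have hleft : 0 ≤ l * (x - a) := mul_nonneg hl (sub_nonneg.2 hx.1)
  have hright : 0 ≤ l * (b - x) := mul_nonneg hl (sub_nonneg.2 hx.2)
  exact Real.cos_pos_of_mem_Ioo ⟨by linarith, by linarith⟩

theorem sq_mul_integral_sq_le_integral_deriv_sq {l : ℝ} (hab : a ≤ b) (hl : 0 ≤ l)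
    (hlab : l * (b - a) < Real.pi) (hu : ContinuousOn u (Icc a b))
    (huu' : ∀ x ∈ Ioo a b, HasDerivAt u (u' x) x)
    (hu' : IntervalIntegrable (fun x ↦ u' x ^ 2) volume a b) (hua : u a = 0) (hub : u b = 0) :
    l ^ 2 * ∫ x in a..b, u x ^ 2 ≤ ∫ x in a..b, u' x ^ 2 := by
  have hw : ∀ x ∈ Icc a b, HasDerivAt (fun x ↦ l * Real.tan (l * (x - (a + b) / 2)))
      (l ^ 2 + (l * Real.tan (l * (x - (a + b) / 2))) ^ 2) x := fun x hx ↦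
    hasDerivAt_mul_tan_mul_sub (cos_mul_sub_midpoint_pos hl hlab hx).ne'
  exact mul_integral_sq_le_integral_deriv_sq_of_riccati hab hu huu' hu' hua hub
    (fun x hx ↦ (hw x hx).continuousAt.continuousWithinAt)
    (fun x hx ↦ hw x (Ioo_subset_Icc_self hx)) (fun _ _ ↦ le_rfl)

theorem wirtinger_inequality (hab : a < b) (hu : ContinuousOn u (Icc a b))
    (huu' : ∀ x ∈ Ioo a b, HasDerivAt u (u' x) x)
    (hu' : IntervalIntegrable (fun x ↦ u' x ^ 2) volume a b) (hua : u a = 0) (hub : u b = 0) :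
    (Real.pi / (b - a)) ^ 2 * ∫ x in a..b, u x ^ 2 ≤ ∫ x in a..b, u' x ^ 2 := by
  have hpos : 0 < Real.pi / (b - a) := div_pos Real.pi_pos (sub_pos.2 hab)
  have hcont : Continuous fun l : ℝ ↦ l ^ 2 * ∫ x in a..b, u x ^ 2 := by fun_prop
  refine le_of_tendsto (hcont.continuousWithinAt (s := Iio (Real.pi / (b - a)))) ?_
  filter_upwards [Ioo_mem_nhdsLT hpos] with l hl
  exact sq_mul_integral_sq_le_integral_deriv_sq hab.le hl.1.le
    ((lt_div_iff₀ (sub_pos.2 hab)).1 hl.2) hu huu' hu' hua hub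

end Wirtinger

section SecondOrder

variable {a b : ℝ} {s s' s'' f : ℝ → ℝ}

theorem integral_deriv_sq_eq_neg_integral_mul_deriv2 (hab : a ≤ b)
    (hs : ContinuousOn s (Icc a b)) (hs' : ContinuousOn s' (Icc a b))
    (hss' : ∀ x ∈ Ioo a b, HasDerivAt s (s' x) x)
    (hs's'' : ∀ x ∈ Ioo a b, HasDerivAt s' (s'' x) x)
    (hs'' : IntervalIntegrable s'' volume a b) (hsa : s a = 0) (hsb : s b = 0) :
    ∫ x in a..b, s' x ^ 2 = -∫ x in a..b, s x * s'' x := by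
  have hparts : ∫ x in a..b, s x * s'' x =
      s b * s' b - s a * s' a - ∫ x in a..b, s' x * s' x :=
    integral_mul_deriv_eq_deriv_mul_of_hasDerivAt
      (by rwa [uIcc_of_le hab]) (by rwa [uIcc_of_le hab])
      (by rwa [min_eq_left hab, max_eq_right hab]) (by rwa [min_eq_left hab, max_eq_right hab])
      (hs'.intervalIntegrable_of_Icc hab) hs''
  simp [hparts, hsa, hsb, sq]

theorem wirtinger_inequality_deriv2 (hab : a < b)
    (hs : ContinuousOn s (Icc a b)) (hs' : ContinuousOn s' (Icc a b))
    (hss' : ∀ x ∈ Ioo a b, HasDerivAt s (s' x) x)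
    (hs's'' : ∀ x ∈ Ioo a b, HasDerivAt s' (s'' x) x)
    (hs'' : MemLp s'' 2 (volume.restrict (Icc a b))) (hsa : s a = 0) (hsb : s b = 0) :
    (Real.pi / (b - a)) ^ 2 * ∫ x in a..b, s' x ^ 2 ≤ ∫ x in a..b, s'' x ^ 2 := by
  set κ := (Real.pi / (b - a)) ^ 2 with hκ
  have hs''_int : IntervalIntegrable s'' volume a b :=
    (intervalIntegrable_iff_integrableOn_Icc_of_le hab.le).2 (hs''.integrable one_le_two)
  have hκs : MemLp (fun x ↦ -κ * s x) 2 (volume.restrict (Icc a b)) :=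
    memLp_two_Icc_of_continuousOn (hs.const_mul (-κ))
  have hcross : ∫ x in a..b, s'' x * (-κ * s x) = κ * ∫ x in a..b, s' x ^ 2 := by
    rw [integral_deriv_sq_eq_neg_integral_mul_deriv2 hab.le hs hs' hss' hs's'' hs''_int hsa hsb,
      mul_neg, ← neg_mul, ← intervalIntegral.integral_const_mul]
    congr with x; ring
  have hsq : ∫ x in a..b, (-κ * s x) ^ 2 = κ * (κ * ∫ x in a..b, s x ^ 2) := by
    simp only [mul_pow, neg_sq, intervalIntegral.integral_const_mul]
    ring
  have hwirtinger : κ * (κ * ∫ x in a..b, s x ^ 2) ≤ κ * ∫ x in a..b, s' x ^ 2 :=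
    mul_le_mul_of_nonneg_left
      (wirtinger_inequality hab hs hss' ((hs'.pow 2).intervalIntegrable_of_Icc hab.le) hsa hsb)
      (hκ ▸ sq_nonneg _)
  have hnonneg : 0 ≤ ∫ x in a..b, (s'' x - -κ * s x) ^ 2 :=
    intervalIntegral.integral_nonneg hab.le fun _ _ ↦ sq_nonneg _
  rw [integral_sub_sq hab.le hs'' hκs, hcross, hsq] at hnonneg
  linarith

theorem integral_deriv2_mul_comp_le (hab : a ≤ b)
    (hs : ContinuousOn s (Icc a b)) (hs' : ContinuousOn s' (Icc a b))
    (hss' : ∀ x ∈ Ioo a b, HasDerivAt s (s' x) x)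
    (hs's'' : ∀ x ∈ Ioo a b, HasDerivAt s' (s'' x) x)
    (hs'' : IntervalIntegrable s'' volume a b)
    (hf : Differentiable ℝ f) (hf' : ∀ y, 0 ≤ deriv f y) :
    ∫ x in a..b, s'' x * f (s x) ≤ s' b * f (s b) - s' a * f (s a) := by
  have hfs : ContinuousOn (fun x ↦ f (s x)) (Icc a b) := hf.continuous.comp_continuousOn hs
  have hderiv : ∀ x ∈ Ioo a b, HasDerivAt (fun x ↦ s' x * f (s x))
      (s'' x * f (s x) + s' x * (deriv f (s x) * s' x)) x := fun x hx ↦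
    (hs's'' x hx).mul ((hf (s x)).hasDerivAt.comp x (hss' x hx))
  refine integral_le_sub_of_hasDeriv_right_of_le hab (hs'.mul hfs)
    (fun x hx ↦ (hderiv x hx).hasDerivWithinAt)
    ((intervalIntegrable_iff_integrableOn_Icc_of_le hab).1
      (hs''.mul_continuousOn (by rwa [uIcc_of_le hab]))) fun x _ ↦ ?_
  linarith [mul_nonneg (hf' (s x)) (sq_nonneg (s' x))]

end SecondOrder

theorem stmt12_general {a b : ℝ} {s s' s'' f : ℝ → ℝ} (hab : a < b)
    (hs : ContinuousOn s (Icc a b)) (hs' : ContinuousOn s' (Icc a b))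
    (hss' : ∀ x ∈ Ioo a b, HasDerivAt s (s' x) x)
    (hs's'' : ∀ x ∈ Ioo a b, HasDerivAt s' (s'' x) x)
    (hs'' : MemLp s'' 2 (volume.restrict (Icc a b))) (hsa : s a = 0) (hsb : s b = 0)
    (hf : Differentiable ℝ f) (hf0 : f 0 = 0) (hf' : ∀ y, 0 ≤ deriv f y) :
    (Real.pi / (b - a)) ^ 2 * ∫ x in a..b, s' x ^ 2 ≤ ∫ x in a..b, (s'' x - f (s x)) ^ 2 := by
  have hfs : MemLp (fun x ↦ f (s x)) 2 (volume.restrict (Icc a b)) :=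
    memLp_two_Icc_of_continuousOn (hf.continuous.comp_continuousOn hs)
  have hs''_int : IntervalIntegrable s'' volume a b :=
    (intervalIntegrable_iff_integrableOn_Icc_of_le hab.le).2 (hs''.integrable one_le_two)
  have hcross : ∫ x in a..b, s'' x * f (s x) ≤ 0 := by
    simpa [hsa, hsb, hf0] using
      integral_deriv2_mul_comp_le hab.le hs hs' hss' hs's'' hs''_int hf hf'
  calc (Real.pi / (b - a)) ^ 2 * ∫ x in a..b, s' x ^ 2
      ≤ ∫ x in a..b, s'' x ^ 2 :=
        wirtinger_inequality_deriv2 hab hs hs' hss' hs's'' hs'' hsa hsb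
    _ ≤ ∫ x in a..b, (s'' x - f (s x)) ^ 2 :=
        integral_sq_le_integral_sub_sq hab.le hs'' hfs hcross

/-- For a twice continuously differentiable `s : [0,π] → ℝ` with `s(0) = s(π) = 0` and a
continuously differentiable `f : ℝ → ℝ` with `f(0) = 0` and `f' ≥ 0`, one has
`∫₀^π (s'' - f(s))² dx ≥ ∫₀^π (s')² dx`. -/
theorem stmt12 (s s' s'' : ℝ → ℝ)
    (hs' : ∀ x ∈ Icc (0:ℝ) Real.pi, HasDerivWithinAt s (s' x) (Icc 0 Real.pi) x)
    (hs'' : ∀ x ∈ Icc (0:ℝ) Real.pi, HasDerivWithinAt s' (s'' x) (Icc 0 Real.pi) x)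
    (hs''c : ContinuousOn s'' (Icc 0 Real.pi))
    (hs0 : s 0 = 0) (hsπ : s Real.pi = 0)
    (f : ℝ → ℝ) (hf : ContDiff ℝ 1 f) (hf0 : f 0 = 0)
    (hf' : ∀ y : ℝ, 0 ≤ deriv f y) :
    ∫ x in (0:ℝ)..Real.pi, (s' x) ^ 2 ≤
      ∫ x in (0:ℝ)..Real.pi, (s'' x - f (s x)) ^ 2 := by
  simpa [Real.pi_ne_zero] using stmt12_general Real.pi_pos
    (fun x hx ↦ (hs' x hx).continuousWithinAt) (fun x hx ↦ (hs'' x hx).continuousWithinAt)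
    (fun x hx ↦ (hs' x (Ioo_subset_Icc_self hx)).hasDerivAt (Icc_mem_nhds hx.1 hx.2))
    (fun x hx ↦ (hs'' x (Ioo_subset_Icc_self hx)).hasDerivAt (Icc_mem_nhds hx.1 hx.2))
    (memLp_two_Icc_of_continuousOn hs''c) hs0 hsπ (hf.differentiable one_ne_zero) hf0 hf'
end

section
/- Let s : [0,π] → ℝ be continuously differentiable with s(0) = s(π) = 0 and let f : ℝ → ℝ be continuous, odd (f(−y) = −f(y) for all y) and non-decreasing. Write ‖s′‖ = ( ∫₀^π (s′(x))² dx )^{1/2} and define V(s) = ∫₀^π ( (1/2)(s′(x))² + ∫₀^{s(x)} f(y) dy ) dx. Then (1/2)‖s′‖² ≤ V(s) ≤ (1/2)‖s′‖² + π ∫₀^{√π · ‖s′‖} f(y) dy. In particular, there are functions ψ₁, ψ₂ of class K∞ (namely ψ₁(r) = r²/2 and ψ₂(r) = r²/2 + π∫₀^{√π r} f(y)dy, assuming f is strictly increasing and unbounded) with ψ₁(‖s‖_{H¹₀}) ≤ V(s) ≤ ψ₂(‖s‖_{H¹₀}), where ‖s‖_{H¹₀} = ‖s′‖. -/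
open Filter Set MeasureTheory intervalIntegral

/-!
Because `f` is odd and monotone, its potential `F(r) = ∫₀^r f` is even, nonnegative and monotone in
`|r|`. Write `V(s) = ‖s'‖² / 2 + ∫ F(s(x)) dx`: nonnegativity of `F` gives the lower bound, and for
the upper bound Cauchy–Schwarz applied to `s(x) = ∫ₐ^x s'` gives `|s(x)| ≤ √(b - a) ‖s'‖`, so the
integral is at most `(b - a) F(√(b - a) ‖s'‖)`. The comparison function of the upper bound is
`r² / 2` plus a nonnegative monotone term, so it inherits class `K∞` from `r² / 2`.
-/

section LebesgueSpaces

theorem memLp_restrict_of_continuousOn_of_isCompact {α E : Type*} [TopologicalSpace α]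
    [MeasurableSpace α] [OpensMeasurableSpace α] [NormedAddCommGroup E] {μ : Measure α}
    [IsFiniteMeasureOnCompacts μ] {K : Set α} {g : α → E} (p : ENNReal)
    (hK : IsCompact K) (hKm : MeasurableSet K) (hg : ContinuousOn g K) :
    MemLp g p (μ.restrict K) := by
  have : IsFiniteMeasure (μ.restrict K) := isFiniteMeasure_restrict.2 hK.measure_lt_top.ne
  obtain ⟨C, hC⟩ := hK.exists_bound_of_continuousOn hg
  exact .of_bound (hg.aestronglyMeasurable_of_isCompact hK hKm) C (ae_restrict_of_forall_mem hKm hC)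

theorem memLp_restrict_Ioc_of_continuousOn_Icc {E : Type*} [NormedAddCommGroup E] {a b : ℝ}
    {g : ℝ → E} (p : ENNReal) (hg : ContinuousOn g (Icc a b)) :
    MemLp g p (volume.restrict (Ioc a b)) :=
  (memLp_restrict_of_continuousOn_of_isCompact p isCompact_Icc measurableSet_Icc hg).mono_measure
    (Measure.restrict_mono Ioc_subset_Icc_self le_rfl)

theorem norm_integral_le_sqrt_measureReal_mul_sqrt {α E : Type*} [MeasurableSpace α]
    [NormedAddCommGroup E] [NormedSpace ℝ E] {μ : Measure α} [IsFiniteMeasure μ] {g : α → E}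
    (hg : MemLp g 2 μ) :
    ‖∫ x, g x ∂μ‖ ≤ √(μ.real univ) * √(∫ x, ‖g x‖ ^ 2 ∂μ) := by
  have holder := integral_mul_le_Lp_mul_Lq_of_nonneg (μ := μ) Real.HolderConjugate.two_two
    (f := fun _ ↦ 1) (g := fun x ↦ ‖g x‖) (ae_of_all μ fun _ ↦ zero_le_one)
    (ae_of_all μ fun x ↦ norm_nonneg (g x)) (memLp_const 1) (by simpa using hg.norm)
  calc ‖∫ x, g x ∂μ‖ ≤ ∫ x, ‖g x‖ ∂μ := norm_integral_le_integral_norm g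
    _ ≤ √(μ.real univ) * √(∫ x, ‖g x‖ ^ 2 ∂μ) := by
      simpa only [one_mul, one_pow, MeasureTheory.integral_const, smul_eq_mul, mul_one,
        Real.rpow_two, ← Real.sqrt_eq_rpow] using holder

end LebesgueSpaces

section DirichletNorm

variable {a b x : ℝ} {s s' : ℝ → ℝ}

/-- The norm `‖s‖_{H¹₀} = ‖s'‖_{L²}` on the interval from `a` to `b`. The derivative `s'` is passed
instead of `s`, so that no junk values of `deriv` at the endpoints enter. -/
noncomputable def dirichletNorm (a b : ℝ) (s' : ℝ → ℝ) : ℝ :=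
  √(∫ x in a..b, s' x ^ 2)

theorem dirichletNorm_sq (hab : a ≤ b) : dirichletNorm a b s' ^ 2 = ∫ x in a..b, s' x ^ 2 :=
  Real.sq_sqrt (integral_nonneg hab fun _ _ ↦ sq_nonneg _)

theorem intervalIntegrable_sq_of_memLp_two (hab : a ≤ b)
    (hs' : MemLp s' 2 (volume.restrict (Ioc a b))) :
    IntervalIntegrable (fun x ↦ s' x ^ 2) volume a b :=
  (intervalIntegrable_iff_integrableOn_Ioc_of_le hab).2 hs'.integrable_sq

theorem dirichletNorm_le_of_mem_Icc (hs' : MemLp s' 2 (volume.restrict (Ioc a b)))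
    (hx : x ∈ Icc a b) : dirichletNorm a x s' ≤ dirichletNorm a b s' :=
  Real.sqrt_le_sqrt <| integral_mono_interval le_rfl hx.1 hx.2
    (ae_of_all _ fun _ ↦ sq_nonneg _) (intervalIntegrable_sq_of_memLp_two (hx.1.trans hx.2) hs')

theorem abs_sub_le_sqrt_mul_dirichletNorm (hab : a ≤ b) (hs : ContinuousOn s (Icc a b))
    (hderiv : ∀ x ∈ Ioo a b, HasDerivAt s (s' x) x)
    (hs' : MemLp s' 2 (volume.restrict (Ioc a b))) :
    |s b - s a| ≤ √(b - a) * dirichletNorm a b s' := by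
  have hint : IntervalIntegrable s' volume a b :=
    (intervalIntegrable_iff_integrableOn_Ioc_of_le hab).2 (hs'.integrable one_le_two)
  rw [← integral_eq_sub_of_hasDerivAt_of_le hab hs hderiv hint, dirichletNorm,
    integral_of_le hab, integral_of_le hab]
  simpa [hab] using norm_integral_le_sqrt_measureReal_mul_sqrt hs'

theorem abs_le_sqrt_mul_dirichletNorm (hs : ContinuousOn s (Icc a b))
    (hderiv : ∀ x ∈ Ioo a b, HasDerivAt s (s' x) x)
    (hs' : MemLp s' 2 (volume.restrict (Ioc a b))) (hsa : s a = 0) (hx : x ∈ Icc a b) :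
    |s x| ≤ √(b - a) * dirichletNorm a b s' :=
  calc |s x| = |s x - s a| := by rw [hsa, sub_zero]
    _ ≤ √(x - a) * dirichletNorm a x s' :=
      abs_sub_le_sqrt_mul_dirichletNorm hx.1 (hs.mono (Icc_subset_Icc_right hx.2))
        (fun y hy ↦ hderiv y (Ioo_subset_Ioo_right hx.2 hy))
        (hs'.mono_measure (Measure.restrict_mono (Ioc_subset_Ioc_right hx.2) le_rfl))
    _ ≤ √(b - a) * dirichletNorm a b s' :=
      mul_le_mul (Real.sqrt_le_sqrt (sub_le_sub_right hx.2 a)) (dirichletNorm_le_of_mem_Icc hs' hx)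
        (Real.sqrt_nonneg _) (Real.sqrt_nonneg _)

end DirichletNorm

section Potential

variable {f : ℝ → ℝ} {r R : ℝ}

/-- The potential `F(r) = ∫₀^r f` of the reaction term `f`. -/
noncomputable def potential (f : ℝ → ℝ) (r : ℝ) : ℝ :=
  ∫ y in (0 : ℝ)..r, f y

theorem potential_zero : potential f 0 = 0 :=
  integral_same

theorem continuous_potential (hf : ∀ a b, IntervalIntegrable f volume a b) :
    Continuous (potential f) :=
  continuous_primitive hf 0

theorem monotoneOn_potential (hf : ∀ a b, IntervalIntegrable f volume a b)
    (hpos : ∀ y, 0 ≤ y → 0 ≤ f y) : MonotoneOn (potential f) (Ici 0) := by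
  intro a ha b _ hab
  rw [← sub_nonneg, potential, potential, integral_interval_sub_left (hf 0 b) (hf 0 a)]
  exact integral_nonneg hab fun y hy ↦ hpos y (ha.trans hy.1)

theorem even_potential (hodd : f.Odd) : (potential f).Even := by
  intro r
  have hsubst := integral_comp_neg (a := 0) (b := r) f
  simp only [hodd.eq, intervalIntegral.integral_neg, neg_zero] at hsubst
  rw [potential, potential, integral_symm, ← hsubst, neg_neg]

theorem potential_abs (hodd : f.Odd) (r : ℝ) : potential f |r| = potential f r := by
  rcases abs_choice r with h | h <;> rw [h]
  exact even_potential hodd r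

theorem nonneg_of_odd_of_monotone (hodd : f.Odd) (hmono : Monotone f) {y : ℝ} (hy : 0 ≤ y) :
    0 ≤ f y :=
  hodd.map_zero ▸ hmono hy

theorem potential_le_potential_of_abs_le (hodd : f.Odd) (hmono : Monotone f) (h : |r| ≤ R) :
    potential f r ≤ potential f R :=
  potential_abs hodd r ▸ monotoneOn_potential (fun _ _ ↦ hmono.intervalIntegrable)
    (fun _ ↦ nonneg_of_odd_of_monotone hodd hmono) (abs_nonneg r) ((abs_nonneg r).trans h) h

theorem potential_nonneg (hodd : f.Odd) (hmono : Monotone f) (r : ℝ) : 0 ≤ potential f r :=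
  calc 0 = potential f 0 := potential_zero.symm
    _ ≤ potential f |r| := potential_le_potential_of_abs_le hodd hmono (by simp)
    _ = potential f r := potential_abs hodd r

end Potential

section ClassKinf

theorem classKinf_sq_div_two : ClassKinf fun r ↦ r ^ 2 / 2 := by
  refine ⟨⟨by fun_prop, fun a ha b _ hab ↦ ?_, by norm_num⟩, fun M ↦ ⟨|M| + 2, by positivity, ?_⟩⟩
  · exact div_lt_div_of_pos_right (pow_lt_pow_left₀ hab ha two_ne_zero) two_pos
  · nlinarith [le_abs_self M, abs_nonneg M]

theorem ClassKinf.add_monotoneOn {γ φ : ℝ → ℝ} (hγ : ClassKinf γ) (hc : ContinuousOn φ (Ici 0))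
    (hmono : MonotoneOn φ (Ici 0)) (h0 : φ 0 = 0) : ClassKinf fun r ↦ γ r + φ r := by
  obtain ⟨⟨hγc, hγmono, hγ0⟩, hγunb⟩ := hγ
  refine ⟨⟨hγc.add hc, hγmono.add_monotone hmono, by simp [hγ0, h0]⟩, fun M ↦ ?_⟩
  obtain ⟨r, hr, hMr⟩ := hγunb M
  have hφr : 0 ≤ φ r := h0 ▸ hmono self_mem_Ici hr hr
  exact ⟨r, hr, lt_add_of_lt_of_nonneg hMr hφr⟩

theorem classKinf_sq_div_two_add_potential {f : ℝ → ℝ} {c k : ℝ}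
    (hf : ∀ a b, IntervalIntegrable f volume a b) (hpos : ∀ y, 0 ≤ y → 0 ≤ f y)
    (hc : 0 ≤ c) (hk : 0 ≤ k) : ClassKinf fun r ↦ r ^ 2 / 2 + c * potential f (k * r) := by
  have hcont := continuous_potential hf
  refine classKinf_sq_div_two.add_monotoneOn (by fun_prop) (fun p hp q hq hpq ↦ ?_)
    (by simp [potential_zero])
  exact mul_le_mul_of_nonneg_left (monotoneOn_potential hf hpos (mul_nonneg hk hp)
    (mul_nonneg hk hq) (mul_le_mul_of_nonneg_left hpq hk)) hc

end ClassKinf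

section LyapunovFunctional

variable {a b C : ℝ} {f s s' : ℝ → ℝ}

/-- The ISS-Lyapunov function candidate `V(s) = ∫ (s'² / 2 + F(s))`, where `F` is the potential of
the reaction term `f` and `s'` stands for the derivative of `s`. -/
noncomputable def lyapunovFunctional (a b : ℝ) (f s s' : ℝ → ℝ) : ℝ :=
  ∫ x in a..b, (1 / 2 * s' x ^ 2 + potential f (s x))

theorem intervalIntegrable_potential_comp (hab : a ≤ b) (hs : ContinuousOn s (Icc a b))
    (hf : ∀ a b, IntervalIntegrable f volume a b) :
    IntervalIntegrable (fun x ↦ potential f (s x)) volume a b :=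
  ((continuous_potential hf).comp_continuousOn hs).intervalIntegrable_of_Icc hab

theorem lyapunovFunctional_eq (hab : a ≤ b) (hs : ContinuousOn s (Icc a b))
    (hs' : MemLp s' 2 (volume.restrict (Ioc a b)))
    (hf : ∀ a b, IntervalIntegrable f volume a b) :
    lyapunovFunctional a b f s s' =
      1 / 2 * dirichletNorm a b s' ^ 2 + ∫ x in a..b, potential f (s x) := by
  rw [lyapunovFunctional,
    integral_add ((intervalIntegrable_sq_of_memLp_two hab hs').const_mul _)
      (intervalIntegrable_potential_comp hab hs hf),
    intervalIntegral.integral_const_mul, dirichletNorm_sq hab]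

theorem half_sq_dirichletNorm_le_lyapunovFunctional (hab : a ≤ b) (hs : ContinuousOn s (Icc a b))
    (hs' : MemLp s' 2 (volume.restrict (Ioc a b))) (hodd : f.Odd) (hmono : Monotone f) :
    1 / 2 * dirichletNorm a b s' ^ 2 ≤ lyapunovFunctional a b f s s' := by
  rw [lyapunovFunctional_eq hab hs hs' fun _ _ ↦ hmono.intervalIntegrable]
  exact le_add_of_nonneg_right (integral_nonneg hab fun x _ ↦ potential_nonneg hodd hmono (s x))

theorem lyapunovFunctional_le_of_abs_le (hab : a ≤ b) (hs : ContinuousOn s (Icc a b))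
    (hs' : MemLp s' 2 (volume.restrict (Ioc a b))) (hodd : f.Odd) (hmono : Monotone f)
    (hC : ∀ x ∈ Icc a b, |s x| ≤ C) :
    lyapunovFunctional a b f s s' ≤
      1 / 2 * dirichletNorm a b s' ^ 2 + (b - a) * potential f C := by
  have hf (a b : ℝ) : IntervalIntegrable f volume a b := hmono.intervalIntegrable
  have hF : ∫ x in a..b, potential f (s x) ≤ ∫ _ in a..b, potential f C :=
    integral_mono_on hab (intervalIntegrable_potential_comp hab hs hf) intervalIntegrable_const
      fun x hx ↦ potential_le_potential_of_abs_le hodd hmono (hC x hx)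
  rw [intervalIntegral.integral_const, smul_eq_mul] at hF
  rw [lyapunovFunctional_eq hab hs hs' hf]
  gcongr

end LyapunovFunctional

theorem stmt14_general {a b : ℝ} {f s s' : ℝ → ℝ} (hab : a ≤ b) (hs : ContinuousOn s (Icc a b))
    (hderiv : ∀ x ∈ Ioo a b, HasDerivAt s (s' x) x)
    (hs' : MemLp s' 2 (volume.restrict (Ioc a b))) (hsa : s a = 0)
    (hodd : f.Odd) (hmono : Monotone f) :
    1 / 2 * dirichletNorm a b s' ^ 2 ≤ lyapunovFunctional a b f s s' ∧
    lyapunovFunctional a b f s s' ≤ 1 / 2 * dirichletNorm a b s' ^ 2 +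
      (b - a) * potential f (√(b - a) * dirichletNorm a b s') ∧
    ClassKinf (fun r ↦ r ^ 2 / 2) ∧
    ClassKinf (fun r ↦ r ^ 2 / 2 + (b - a) * potential f (√(b - a) * r)) :=
  ⟨half_sq_dirichletNorm_le_lyapunovFunctional hab hs hs' hodd hmono,
    lyapunovFunctional_le_of_abs_le hab hs hs' hodd hmono fun _ ↦
      abs_le_sqrt_mul_dirichletNorm hs hderiv hs' hsa,
    classKinf_sq_div_two,
    classKinf_sq_div_two_add_potential (fun _ _ ↦ hmono.intervalIntegrable)
      (fun _ ↦ nonneg_of_odd_of_monotone hodd hmono) (sub_nonneg.2 hab) (Real.sqrt_nonneg _)⟩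

/-- For `s ∈ C¹([0,π])` with `s(0) = s(π) = 0`, odd non-decreasing continuous `f`, with
`N = ‖s‖_{H¹₀} = (∫₀^π (s')²)^{1/2}` and `V = ∫₀^π ((1/2)(s')² + ∫₀^{s(x)} f(y) dy) dx`, one has
`(1/2)N² ≤ V ≤ (1/2)N² + π ∫₀^{√π N} f(y) dy`; in particular (for strictly increasing
unbounded `f`) the bounding functions `ψ₁(r) = r²/2` and `ψ₂(r) = r²/2 + π∫₀^{√π r} f` are of
class `K∞`. -/
theorem stmt14 (s s' : ℝ → ℝ)
    (hs' : ∀ x ∈ Icc (0:ℝ) Real.pi, HasDerivWithinAt s (s' x) (Icc 0 Real.pi) x)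
    (hs'c : ContinuousOn s' (Icc 0 Real.pi))
    (hs0 : s 0 = 0) (hsπ : s Real.pi = 0)
    (f : ℝ → ℝ) (hfc : Continuous f) (hodd : ∀ y : ℝ, f (-y) = -f y) (hmono : Monotone f)
    (N V : ℝ)
    (hN : N = Real.sqrt (∫ x in (0:ℝ)..Real.pi, (s' x) ^ 2))
    (hV : V = ∫ x in (0:ℝ)..Real.pi,
        ((1 / 2) * (s' x) ^ 2 + ∫ y in (0:ℝ)..(s x), f y)) :
    (1 / 2) * N ^ 2 ≤ V ∧
    V ≤ (1 / 2) * N ^ 2 + Real.pi * ∫ y in (0:ℝ)..(Real.sqrt Real.pi * N), f y ∧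
    (StrictMono f → (∀ M : ℝ, ∃ r : ℝ, M < f r) →
      ClassKinf (fun r => r ^ 2 / 2) ∧
      ClassKinf (fun r => r ^ 2 / 2 + Real.pi * ∫ y in (0:ℝ)..(Real.sqrt Real.pi * r), f y)) := by
  subst hN hV
  obtain ⟨hlower, hupper, hψ₁, hψ₂⟩ := stmt14_general Real.pi_pos.le
    (fun x hx ↦ (hs' x hx).continuousWithinAt)
    (fun x hx ↦ (hs' x (Ioo_subset_Icc_self hx)).hasDerivAt (Icc_mem_nhds hx.1 hx.2))
    (memLp_restrict_Ioc_of_continuousOn_Icc 2 hs'c) hs0 hodd hmono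
  rw [sub_zero] at hupper hψ₂
  exact ⟨hlower, hupper, fun _ _ ↦ ⟨hψ₁, hψ₂⟩⟩
end

section
/- Let n ≥ 1, let X₁, …, X_n be real Hilbert spaces and U a normed linear space. For each i let D(A_i) ⊆ X_i be a linear subspace and A_i : D(A_i) → X_i a linear map; let P_i : X_i → X_i be a bounded self-adjoint linear operator satisfying ⟨A_i x_i, P_i x_i⟩ + ⟨P_i x_i, A_i x_i⟩ ≤ −‖x_i‖²_{X_i} for all x_i ∈ D(A_i); let B_{ij} : X_j → X_i be bounded linear operators with B_{ii} = 0, and C_i : U → X_i bounded linear operators. Fix ε ∈ (0,1). Then for every i, every u ∈ U and every tuple (x₁,…,x_n) with x_j ∈ X_j and x_i ∈ D(A_i), the gain condition ‖x_i‖_{X_i} ≥ (2‖P_i‖/(1−ε)) · ( Σ_{j≠i} ‖B_{ij}‖·‖x_j‖_{X_j} + ‖C_i‖·‖u‖_U ) implies 2⟨P_i x_i, A_i x_i + Σ_{j=1}^n B_{ij} x_j + C_i u⟩ ≤ −ε‖x_i‖²_{X_i}. Hence V_i(x_i) = ⟨P_i x_i, x_i⟩ is an ISS-Lyapunov function for the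 i-th subsystem ẋ_i = A_i x_i + Σ_j B_{ij} x_j + C_i u of the interconnected linear system, with the states x_j (j ≠ i) and u regarded as inputs. -/
open Set RealInnerProductSpace

/-!
Since the inner product is real, the Lyapunov inequality for `P` reads `2⟪P x, A x⟫ ≤ -‖x‖ ^ 2`.
The remaining input `w = ∑ j, B j (x j) + C u` enters the dissipation only through the cross term
`2⟪P x, w⟫`. By Cauchy-Schwarz this term is at most `2‖P‖‖x‖‖w‖`, which the gain condition keeps
below `(1 - ε)‖x‖ ^ 2`, so that `-ε‖x‖ ^ 2` of the decay survives.
-/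

section NormEstimates

variable {𝕜 : Type*} [NontriviallyNormedField 𝕜]

theorem norm_sum_apply_add_apply_le {ι : Type*} [Fintype ι] [DecidableEq ι]
    {E : ι → Type*} [∀ j, SeminormedAddCommGroup (E j)] [∀ j, NormedSpace 𝕜 (E j)]
    {F U : Type*} [SeminormedAddCommGroup F] [NormedSpace 𝕜 F]
    [SeminormedAddCommGroup U] [NormedSpace 𝕜 U]
    {B : ∀ j, E j →L[𝕜] F} {i : ι} (hB : B i = 0) (C : U →L[𝕜] F) (x : ∀ j, E j) (u : U) :
    ‖(∑ j, B j (x j)) + C u‖ ≤ (∑ j ∈ Finset.univ.erase i, ‖B j‖ * ‖x j‖) + ‖C‖ * ‖u‖ := by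
  have hBx : B i (x i) = 0 := by rw [hB, zero_apply]
  rw [← Finset.sum_erase (f := fun j => B j (x j)) Finset.univ hBx]
  exact norm_add_le_of_le (norm_sum_le_of_le _ fun j _ => (B j).le_opNorm (x j)) (C.le_opNorm u)

theorem two_mul_norm_apply_mul_le_of_gain_le {E F : Type*}
    [SeminormedAddCommGroup E] [NormedSpace 𝕜 E] [SeminormedAddCommGroup F] [NormedSpace 𝕜 F]
    (P : E →L[𝕜] F) {x : E} {r ε : ℝ} (hr : 0 ≤ r) (hε : ε < 1)
    (hgain : 2 * ‖P‖ / (1 - ε) * r ≤ ‖x‖) :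
    2 * (‖P x‖ * r) ≤ (1 - ε) * ‖x‖ ^ 2 := by
  have hPr : 2 * ‖P‖ * r ≤ ‖x‖ * (1 - ε) := by
    rwa [div_mul_eq_mul_div, div_le_iff₀ (sub_pos.2 hε)] at hgain
  calc 2 * (‖P x‖ * r) ≤ 2 * (‖P‖ * ‖x‖ * r) := by gcongr; exact P.le_opNorm x
    _ = 2 * ‖P‖ * r * ‖x‖ := by ring
    _ ≤ ‖x‖ * (1 - ε) * ‖x‖ := by gcongr
    _ = (1 - ε) * ‖x‖ ^ 2 := by ring

end NormEstimates

theorem two_mul_inner_add_le_neg_mul {E : Type*} [SeminormedAddCommGroup E]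
    [InnerProductSpace ℝ E] {p a w : E} {q r ε : ℝ} (ha : 2 * ⟪p, a⟫ ≤ -q)
    (hw : ‖w‖ ≤ r) (hr : 2 * (‖p‖ * r) ≤ (1 - ε) * q) :
    2 * ⟪p, a + w⟫ ≤ -ε * q := by
  have hcross : ⟪p, w⟫ ≤ ‖p‖ * r := (real_inner_le_norm p w).trans (by gcongr)
  calc 2 * ⟪p, a + w⟫ = 2 * ⟪p, a⟫ + 2 * ⟪p, w⟫ := by rw [inner_add_right, mul_add]
    _ ≤ -q + (1 - ε) * q := by linarith
    _ = -ε * q := by ring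

theorem stmt15_general {U : Type*} [SeminormedAddCommGroup U] [NormedSpace ℝ U]
    {ι : Type*} [Fintype ι] [DecidableEq ι]
    {X : ι → Type*} [∀ j, SeminormedAddCommGroup (X j)] [∀ j, InnerProductSpace ℝ (X j)]
    {i : ι} {D : Set (X i)} {A : D → X i} {P : X i →L[ℝ] X i}
    (hLyap : ∀ x : D, ⟪A x, P (x : X i)⟫ + ⟪P (x : X i), A x⟫ ≤ -‖(x : X i)‖ ^ 2)
    {B : ∀ j, X j →L[ℝ] X i} (hB : B i = 0) (C : U →L[ℝ] X i)
    {ε : ℝ} (hε : ε < 1) (u : U) (x : ∀ j, X j) (hx : x i ∈ D)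
    (hgain : (2 * ‖P‖ / (1 - ε)) *
      ((∑ j ∈ Finset.univ.erase i, ‖B j‖ * ‖x j‖) + ‖C‖ * ‖u‖) ≤ ‖x i‖) :
    2 * ⟪P (x i), A ⟨x i, hx⟩ + (∑ j, B j (x j)) + C u⟫ ≤ -ε * ‖x i‖ ^ 2 := by
  have hdiss : 2 * ⟪P (x i), A ⟨x i, hx⟩⟫ ≤ -‖x i‖ ^ 2 := by
    simpa only [real_inner_comm, ← two_mul] using hLyap ⟨x i, hx⟩
  have hinput := norm_sum_apply_add_apply_le hB C x u
  rw [add_assoc]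
  exact two_mul_inner_add_le_neg_mul hdiss hinput <|
    two_mul_norm_apply_mul_le_of_gain_le P ((norm_nonneg _).trans hinput) hε hgain

/-- For the interconnected linear system `ẋᵢ = Aᵢxᵢ + Σⱼ Bᵢⱼxⱼ + Cᵢu` over Hilbert spaces,
with `Pᵢ` bounded self-adjoint satisfying `⟨Aᵢxᵢ,Pᵢxᵢ⟩ + ⟨Pᵢxᵢ,Aᵢxᵢ⟩ ≤ -‖xᵢ‖²`, the gain
condition `‖xᵢ‖ ≥ (2‖Pᵢ‖/(1-ε))(Σ_{j≠i}‖Bᵢⱼ‖‖xⱼ‖ + ‖Cᵢ‖‖u‖)` implies the dissipation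
inequality `2⟨Pᵢxᵢ, Aᵢxᵢ + Σⱼ Bᵢⱼxⱼ + Cᵢu⟩ ≤ -ε‖xᵢ‖²`; hence `Vᵢ(xᵢ) = ⟨Pᵢxᵢ,xᵢ⟩` is an
ISS-Lyapunov function for the `i`-th subsystem. -/
theorem stmt15 {U : Type*} [NormedAddCommGroup U] [NormedSpace ℝ U]
    (n : ℕ) (hn : 1 ≤ n)
    (X : Fin n → Type*) [∀ i, NormedAddCommGroup (X i)] [∀ i, InnerProductSpace ℝ (X i)]
    [∀ i, CompleteSpace (X i)]
    (D : ∀ i, Submodule ℝ (X i)) (A : ∀ i, D i →ₗ[ℝ] X i)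
    (P : ∀ i, X i →L[ℝ] X i)
    (hPsa : ∀ i, ∀ x y : X i, ⟪P i x, y⟫ = ⟪x, P i y⟫)
    (hLyap : ∀ i, ∀ x : D i,
        ⟪A i x, P i (x : X i)⟫ + ⟪P i (x : X i), A i x⟫ ≤ -‖(x : X i)‖ ^ 2)
    (B : ∀ i j, X j →L[ℝ] X i) (hBdiag : ∀ i, B i i = 0)
    (C : ∀ i, U →L[ℝ] X i)
    (ε : ℝ) (hε0 : 0 < ε) (hε1 : ε < 1) :
    ∀ i : Fin n, ∀ u : U, ∀ x : (∀ j, X j), ∀ hx : x i ∈ D i,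
      (2 * ‖P i‖ / (1 - ε)) *
          ((∑ j ∈ Finset.univ.erase i, ‖B i j‖ * ‖x j‖) + ‖C i‖ * ‖u‖) ≤ ‖x i‖ →
        2 * ⟪P i (x i), A i ⟨x i, hx⟩ + (∑ j, B i j (x j)) + C i u⟫ ≤ -ε * ‖x i‖ ^ 2 :=
  fun i u x hx => stmt15_general (hLyap i) (hBdiag i) (C i) hε1 u x hx
end
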